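/- Let q run through all prime powers with q ≡ 3 (mod 4). Then σ(q)/q² converges to 825·2⁻¹⁶; that is, for every real ε > 0 there exists N such that for every prime power q with q ≡ 3 (mod 4) and q > N one has |σ(q)/q² − 825/2¹⁶| < ε. -/

import Mathlib

open scoped Classical

noncomputable section

/-- The operation of the quasigroup `Q_{a,b}`:
`u*v = u + a(v-u)` if `v-u` is a square, `u*v = u + b(v-u)` otherwise. -/
def qop {F : Type*} [Field F] (a b u v : F) : F :=
  if IsSquare (v - u) then u + a * (v - u) else u + b * (v - u)

/-- The set `Σ(F)` of pairs `(a,b)` with `a ≠ b`, `a,b ∉ {0,1}`, and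
`ab` and `(1-a)(1-b)` both squares. -/
def SigSet (F : Type*) [Field F] : Set (F × F) :=
  {p | p.1 ≠ p.2 ∧ p.1 ≠ 0 ∧ p.1 ≠ 1 ∧ p.2 ≠ 0 ∧ p.2 ≠ 1 ∧
    IsSquare (p.1 * p.2) ∧ IsSquare ((1 - p.1) * (1 - p.2))}

/-- `Q_{a,b}` is maximally nonassociative. -/
def MaxNA {F : Type*} [Field F] (a b : F) : Prop :=
  ∀ u v w : F, qop a b (qop a b u v) w = qop a b u (qop a b v w) → u = v ∧ v = w

/-- `σ(q)`: the number of pairs `(a,b) ∈ Σ` for which `Q_{a,b}` is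
maximally nonassociative. -/
def sigmaCount (F : Type*) [Field F] : ℕ :=
  Set.ncard {p : F × F | p ∈ SigSet F ∧ MaxNA p.1 p.2}

set_option linter.unusedSectionVars false
namespace MNA
open Polynomial

section Stepanov
variable {F : Type} [Field F] [Fintype F]

/-- If `f` is squarefree and nonconstant, `f r² = c s²` forces `r = s = 0`. -/
lemma sqfree_rel {f : F[X]} (hf : Squarefree f) (hd : 0 < f.natDegree) {c : F} (hc : c ≠ 0)
    {r s : F[X]} (h : f * r ^ 2 = C c * s ^ 2) : r = 0 ∧ s = 0 := by
  have hf0 : f ≠ 0 := by rintro rfl; simp at hd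
  have key : r = 0 := by
    by_contra hr
    have hs : s ≠ 0 := by
      rintro rfl
      simp [hf0, hr] at h
    have hnu : ¬ IsUnit f := fun hu => by
      have := natDegree_eq_zero_of_isUnit hu; omega
    obtain ⟨p, hp, hpf⟩ := WfDvdMonoid.exists_irreducible_factor hnu hf0
    have hpp : Prime p := hp.prime
    have e1 : emultiplicity p f = 1 := by
      refine emultiplicity_eq_coe.2 ⟨by simpa using hpf, ?_⟩
      intro hh
      exact hp.not_isUnit (hf p (by simpa [pow_two] using hh))
    have e2 : emultiplicity p (C c) = 0 := by
      refine emultiplicity_eq_zero.2 fun hh => hp.not_isUnit (isUnit_of_dvd_unit hh ?_)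
      exact (isUnit_C).2 (isUnit_iff_ne_zero.2 hc)
    have h2 := congrArg (emultiplicity p) h
    rw [emultiplicity_mul hpp, emultiplicity_mul hpp, emultiplicity_pow hpp, emultiplicity_pow hpp,
      e1, e2] at h2
    have fr : FiniteMultiplicity p r := FiniteMultiplicity.of_not_isUnit hp.not_isUnit hr
    have fs : FiniteMultiplicity p s := FiniteMultiplicity.of_not_isUnit hp.not_isUnit hs
    rw [fr.emultiplicity_eq_multiplicity, fs.emultiplicity_eq_multiplicity] at h2
    have h3 : 1 + 2 * multiplicity p r = 0 + 2 * multiplicity p s := by exact_mod_cast h2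
    omega
  subst key
  refine ⟨rfl, ?_⟩
  by_contra hs
  simp [hc, hs] at h

lemma expand_sub_dvd (f : F[X]) (q : ℕ) : (X : F[X]) ^ q ∣ expand F q f - C (f.eval 0) := by
  refine ⟨expand F q f.divX, ?_⟩
  conv_lhs => rw [← f.divX_mul_X_add]
  simp [coeff_zero_eq_eval_zero, mul_comm]

lemma step_nonvanish {f : F[X]} (hf0 : f.eval 0 ≠ 0) (hf : Squarefree f) (hd : 0 < f.natDegree)
    {c D : ℕ} (hc : 2 * c + 1 = Fintype.card F) (hD : f.natDegree + 2 * D < Fintype.card F) :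
    ∀ (J : ℕ) (r s : ℕ → F[X]), (∀ j, (r j).natDegree ≤ D) → (∀ j, (s j).natDegree ≤ D) →
    ∑ j ∈ Finset.range J, (r j + s j * f ^ c) * X ^ (j * Fintype.card F) = 0 →
    ∀ j < J, r j = 0 ∧ s j = 0 := by
  intro J
  induction J with
  | zero => intro r s _ _ _ j hj; omega
  | succ J ih =>
    intro r s hr hs h
    set q := Fintype.card F with hq
    have hfq : expand F q f = f ^ q := FiniteField.expand_card f
    have split : ∀ t : ℕ → F[X], ∑ j ∈ Finset.range (J + 1), t j * X ^ (j * q) =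
        t 0 + X ^ q * ∑ j ∈ Finset.range J, t (j + 1) * X ^ (j * q) := by
      intro t
      rw [Finset.sum_range_succ', Finset.mul_sum, add_comm]
      congr 1
      · simp
      · refine Finset.sum_congr rfl fun j _ => ?_
        ring
    have h01 : (∑ j ∈ Finset.range (J + 1), r j * X ^ (j * q)) +
        f ^ c * ∑ j ∈ Finset.range (J + 1), s j * X ^ (j * q) = 0 := by
      rw [← h, Finset.mul_sum, ← Finset.sum_add_distrib]
      exact Finset.sum_congr rfl fun j _ => by ring
    have hs0 := split (fun j => r j + s j * f ^ c)
    rw [h] at hs0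
    rw [split r, split s] at h01
    set A := ∑ j ∈ Finset.range J, r (j + 1) * X ^ (j * q)
    set B := ∑ j ∈ Finset.range J, s (j + 1) * X ^ (j * q)
    obtain ⟨E, hE⟩ := expand_sub_dvd f q
    rw [hfq] at hE
    have hdvd : X ^ q ∣ f * r 0 ^ 2 - C (f.eval 0) * s 0 ^ 2 := by
      have e : f ^ q = f * (f ^ c) ^ 2 := by rw [← hc]; ring
      have e1 : f * (r 0 + X ^ q * A) ^ 2 = f ^ q * (s 0 + X ^ q * B) ^ 2 := by
        rw [e]
        have : r 0 + X ^ q * A = - (f ^ c * (s 0 + X ^ q * B)) := by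
          linear_combination h01
        rw [this]; ring
      refine ⟨-(f * (2 * r 0 * A + X ^ q * A ^ 2)) + f ^ q * (2 * s 0 * B + X ^ q * B ^ 2)
        + E * s 0 ^ 2, ?_⟩
      linear_combination e1 + s 0 ^ 2 * hE
    have hz : f * r 0 ^ 2 - C (f.eval 0) * s 0 ^ 2 = 0 := by
      by_contra hne
      have h1 := natDegree_le_of_dvd hdvd hne
      have h2 : (f * r 0 ^ 2 - C (f.eval 0) * s 0 ^ 2).natDegree ≤ f.natDegree + 2 * D := by
        refine (natDegree_sub_le _ _).trans (max_le ?_ ?_)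
        · refine natDegree_mul_le.trans ?_
          have := natDegree_pow_le (p := r 0) (n := 2)
          have := hr 0
          omega
        · refine natDegree_mul_le.trans ?_
          have := natDegree_pow_le (p := s 0) (n := 2)
          have := hs 0
          simp only [natDegree_C]
          omega
      rw [natDegree_X_pow] at h1
      omega
    have h0 := sqfree_rel hf hd hf0 (sub_eq_zero.1 hz)
    have hrest := ih (fun j => r (j + 1)) (fun j => s (j + 1)) (fun j => hr _) (fun j => hs _) (by
      simp only [h0.1, h0.2, zero_mul, zero_add] at hs0
      have := hs0.symm
      rcases mul_eq_zero.1 this with h' | h'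
      · exact absurd h' (pow_ne_zero _ X_ne_zero)
      · exact h')
    intro j hj
    rcases j with _ | j
    · exact h0
    · exact hrest j (by omega)

/-- weighted degree condition -/
def W (s e : ℕ) (p : F[X][X]) : Prop := ∀ k, (p.coeff k).natDegree ≤ e + k * s

lemma W.mono {s e e' : ℕ} {p : F[X][X]} (h : W s e p) (he : e ≤ e') : W s e' p :=
  fun k => (h k).trans (by omega)

lemma W.add {s e : ℕ} {p p' : F[X][X]} (h : W s e p) (h' : W s e p') : W s e (p + p') := by
  intro k
  rw [coeff_add]
  exact (natDegree_add_le _ _).trans (max_le (h k) (h' k))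

lemma W.sum {ι : Type*} {s e : ℕ} (t : Finset ι) {p : ι → F[X][X]} (h : ∀ i ∈ t, W s e (p i)) :
    W s e (∑ i ∈ t, p i) := by
  intro k
  rw [finsetSum_coeff]
  exact natDegree_sum_le_of_forall_le _ _ fun i hi => h i hi k

lemma W.mul {s e e' : ℕ} {p p' : F[X][X]} (h : W s e p) (h' : W s e' p') :
    W s (e + e') (p * p') := by
  intro k
  rw [coeff_mul]
  refine natDegree_sum_le_of_forall_le _ _ fun x hx => ?_
  rw [Finset.HasAntidiagonal.mem_antidiagonal] at hx
  refine natDegree_mul_le.trans ?_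
  have h1 := h x.1
  have h2 := h' x.2
  rw [← hx]
  nlinarith

lemma W.C {s : ℕ} (p : F[X]) : W s p.natDegree (C p) := by
  intro k
  rw [coeff_C]
  split_ifs <;> simp

lemma W.pow {s e : ℕ} {p : F[X][X]} (h : W s e p) (n : ℕ) : W s (n * e) (p ^ n) := by
  induction n with
  | zero => simpa using W.C (s := s) (1 : F[X])
  | succ n ih => rw [pow_succ, Nat.succ_mul]; exact ih.mul h

/-- the generic point `X + T f(X)` -/
def Zp (f : F[X]) : F[X][X] := C X + X * C f

lemma W_Zp {f : F[X]} (hd : 0 < f.natDegree) : W (f.natDegree - 1) 1 (Zp f) := by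
  intro k
  unfold Zp
  rcases k with _ | _ | k
  · simp
  · have : (C X + X * C f : F[X][X]).coeff (0 + 1) = f := by
      rw [coeff_add, coeff_X_mul, coeff_C, coeff_C]; simp
    rw [this]; omega
  · have : (C X + X * C f : F[X][X]).coeff (k + 1 + 1) = 0 := by
      rw [coeff_add, coeff_X_mul, coeff_C, coeff_C]; simp
    rw [this]; simp

lemma W_aeval {f : F[X]} (hd : 0 < f.natDegree) (r : F[X]) {D : ℕ} (hr : r.natDegree ≤ D) :
    W (f.natDegree - 1) D (aeval (Zp f) r) := by
  rw [aeval_eq_sum_range]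
  refine W.sum _ fun i hi => ?_
  rw [Finset.mem_range] at hi
  have h := (W_Zp hd).pow i
  intro k
  rw [coeff_smul]
  refine (natDegree_smul_le _ _).trans ((h k).trans (by omega))

lemma exists_u {f : F[X]} (hd : 0 < f.natDegree) :
    ∃ u : F[X][X], aeval (Zp f) f = C f * u ∧ W (f.natDegree - 1) 0 u := by
  have hf0 : f ≠ 0 := by rintro rfl; simp at hd
  have h1 : Zp f - C X ∣ aeval (Zp f) f - aeval (C X : F[X][X]) f := by
    simp only [aeval_def, eval₂_eq_eval_map]
    exact sub_dvd_eval_sub _ _ _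
  have h2 : aeval (C X : F[X][X]) f = C f := by
    have := aeval_algebraMap_apply (F[X][X]) (X : F[X]) f
    simpa using this
  obtain ⟨w, hw⟩ := h1
  rw [h2] at hw
  have hu : aeval (Zp f) f = C f * (1 + X * w) := by
    have : Zp f - C X = X * C f := by simp [Zp]
    rw [this] at hw
    linear_combination hw
  refine ⟨_, hu, fun k => ?_⟩
  have h3 := W_aeval hd f le_rfl k
  rw [hu, coeff_C_mul] at h3
  by_cases h0 : (1 + X * w).coeff k = 0
  · rw [h0]; simp
  · rw [natDegree_mul hf0 h0] at h3
    omega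

/-- the auxiliary two-variable polynomial -/
def Th (f : F[X]) (u : F[X][X]) (c : ℕ) (a : F) {J D : ℕ}
    (v : (Fin J → degreeLT F D) × (Fin J → degreeLT F D)) : F[X][X] :=
  ∑ j : Fin J, (aeval (Zp f) (v.1 j : F[X]) + C (C a) * aeval (Zp f) (v.2 j : F[X]) * u ^ c)
    * C (X ^ (j : ℕ))

/-- the linear conditions -/
def ThL (f : F[X]) (u : F[X][X]) (c : ℕ) (a : F) (J D l M : ℕ) :
    ((Fin J → degreeLT F D) × (Fin J → degreeLT F D)) →ₗ[F] (Fin l → Fin M → F) where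
  toFun v := fun k n => ((Th f u c a v).coeff k).coeff n
  map_add' v w := by
    have : Th f u c a (v + w) = Th f u c a v + Th f u c a w := by
      simp only [Th, ← Finset.sum_add_distrib]
      refine Finset.sum_congr rfl fun j _ => ?_
      simp only [Prod.fst_add, Prod.snd_add, Pi.add_apply, Submodule.coe_add, map_add]
      ring
    funext k n
    simp [this]
  map_smul' t v := by
    have : Th f u c a (t • v) = C (C t) * Th f u c a v := by
      simp only [Th, Finset.mul_sum]
      refine Finset.sum_congr rfl fun j _ => ?_
      simp only [Prod.smul_fst, Prod.smul_snd, Pi.smul_apply, Submodule.coe_smul, map_smul]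
      have e : ∀ p : F[X][X], t • p = C (C t) * p := fun p => by
        rw [Algebra.smul_def]; rfl
      rw [e, e]
      ring
    funext k n
    simp [this]

lemma Th_W {f : F[X]} (hd : 0 < f.natDegree) {u : F[X][X]} (hu : W (f.natDegree - 1) 0 u)
    (c : ℕ) (a : F) {J D : ℕ} (v : (Fin J → degreeLT F D) × (Fin J → degreeLT F D)) :
    W (f.natDegree - 1) (D + J) (Th f u c a v) := by
  have nd : ∀ p : degreeLT F D, (p : F[X]).natDegree ≤ D := fun p =>
    natDegree_le_of_degree_le (mem_degreeLT.1 p.2).le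
  refine W.sum _ fun j _ => ?_
  refine (W.mul (e := D) (e' := J) ?_ ?_)
  · refine (W_aeval hd _ (nd _)).add ?_
    have h1 : W (f.natDegree - 1) 0 (C (C a) : F[X][X]) := by
      simpa using W.C (s := f.natDegree - 1) (C a)
    have := (h1.mul (W_aeval hd (v.2 j : F[X]) (nd _))).mul (hu.pow c)
    exact this.mono (by simp)
  · exact (W.C _).mono (by simp)

lemma dvd_of_comp {R : F[X]} {x e : F} (he : e ≠ 0) {l : ℕ}
    (h : X ^ l ∣ R.comp (C x + C e * X)) : (X - C x) ^ l ∣ R := by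
  obtain ⟨S, hS⟩ := h
  have h1 := congrArg (fun p => p.comp (C e⁻¹ * (X - C x))) hS
  simp only [comp_assoc, mul_comp, add_comp, C_comp, X_comp, pow_comp] at h1
  have h2 : C x + C e * (C e⁻¹ * (X - C x)) = X := by
    rw [← mul_assoc, ← C_mul, mul_inv_cancel₀ he]; simp
  rw [h2, comp_X, mul_pow] at h1
  rw [h1]
  exact Dvd.intro_left (C e⁻¹ ^ l * S.comp (C e⁻¹ * (X - C x))) (by ring)

set_option maxHeartbeats 800000 in
lemma stepanov_bound {f : F[X]} (hf0 : f.eval 0 ≠ 0) (hf : Squarefree f) (hd : 0 < f.natDegree)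
    {c D J l : ℕ} (hc : 2 * c + 1 = Fintype.card F) (hD : f.natDegree + 2 * D < Fintype.card F)
    (hl : l ≤ Fintype.card F)
    (hcount : l * (D + J + l * f.natDegree) < 2 * J * D) (a : F) :
    l * (Finset.univ.filter fun x : F => f.eval x ≠ 0 ∧ f.eval x ^ c = a).card ≤
      D + c * f.natDegree + J * Fintype.card F := by
  obtain ⟨u, hu, hW⟩ := exists_u hd
  set q := Fintype.card F with hq
  set M := D + J + l * f.natDegree with hM
  have hker : LinearMap.ker (ThL f u c a J D l M) ≠ ⊥ := by
    apply LinearMap.ker_ne_bot_of_finrank_lt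
    have e : Module.finrank F (degreeLT F D) = D := by
      rw [(degreeLTEquiv F D).finrank_eq]; simp
    simp only [Module.finrank_prod, Module.finrank_pi_fintype, e, Finset.sum_const,
      Finset.card_univ, Fintype.card_fin, smul_eq_mul, Module.finrank_self, mul_one]
    nlinarith
  obtain ⟨v, hv, hv0⟩ := Submodule.exists_mem_ne_zero_of_ne_bot hker
  have hcoef : ∀ k < l, (Th f u c a v).coeff k = 0 := by
    intro k hk
    ext n
    by_cases hn : n < M
    · have := congrFun (congrFun (LinearMap.mem_ker.1 hv) ⟨k, hk⟩) ⟨n, hn⟩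
      exact this
    · rw [coeff_eq_zero_of_natDegree_lt, coeff_zero]
      refine (Th_W hd hW c a v k).trans_lt ?_
      have : k * (f.natDegree - 1) < l * f.natDegree := by
        calc k * (f.natDegree - 1) ≤ k * f.natDegree := Nat.mul_le_mul_left _ (by omega)
          _ < l * f.natDegree := Nat.mul_lt_mul_of_pos_right hk hd
      omega
  set R : F[X] := ∑ j : Fin J, ((v.1 j : F[X]) + (v.2 j : F[X]) * f ^ c) * X ^ ((j : ℕ) * q) with hR
  have nd : ∀ p : degreeLT F D, (p : F[X]).natDegree ≤ D := fun p =>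
    natDegree_le_of_degree_le (mem_degreeLT.1 p.2).le
  have hR0 : R ≠ 0 := by
    intro h0
    apply hv0
    let r : ℕ → F[X] := fun j => if h : j < J then (v.1 ⟨j, h⟩ : F[X]) else 0
    let s : ℕ → F[X] := fun j => if h : j < J then (v.2 ⟨j, h⟩ : F[X]) else 0
    have key := step_nonvanish hf0 hf hd hc hD J r s
      (fun j => by simp only [r]; split_ifs; exacts [nd _, by simp])
      (fun j => by simp only [s]; split_ifs; exacts [nd _, by simp])
      (by
        rw [Finset.sum_range, ← h0, hR]
        refine Finset.sum_congr rfl fun j _ => ?_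
        simp [r, s, hq])
    ext1
    · funext j
      have := (key j j.2).1
      simp only [r, j.2, dif_pos] at this
      exact Subtype.ext this
    · funext j
      have := (key j j.2).2
      simp only [s, j.2, dif_pos] at this
      exact Subtype.ext this
  have hdeg : R.natDegree ≤ D + c * f.natDegree + J * q := by
    refine natDegree_sum_le_of_forall_le _ _ fun j _ => ?_
    refine natDegree_mul_le.trans ?_
    rw [natDegree_X_pow]
    have h1 : ((j : ℕ)) * q ≤ J * q := Nat.mul_le_mul_right _ j.2.le
    have h2 : ((v.1 j : F[X]) + (v.2 j : F[X]) * f ^ c).natDegree ≤ D + c * f.natDegree := by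
      refine (natDegree_add_le _ _).trans (max_le ((nd _).trans (by omega)) ?_)
      refine natDegree_mul_le.trans ?_
      exact add_le_add (nd _) natDegree_pow_le
    omega
  set S := Finset.univ.filter fun x : F => f.eval x ≠ 0 ∧ f.eval x ^ c = a with hS
  have hdvd : ∀ x ∈ S, (X - C x) ^ l ∣ R := by
    intro x hx
    rw [hS, Finset.mem_filter] at hx
    obtain ⟨-, hx0, hxa⟩ := hx
    apply dvd_of_comp hx0
    let ev : F[X][X] →+* F[X] := mapRingHom (evalRingHom x)
    have hevZ : ∀ r : F[X], ev (aeval (Zp f) r) = r.comp (C x + C (f.eval x) * X) := by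
      intro r
      have h1 : ev (aeval (Zp f) r) = eval₂ (ev.comp (algebraMap F F[X][X])) (ev (Zp f)) r := by
        rw [aeval_def, hom_eval₂]
      have h2 : ev.comp (algebraMap F F[X][X]) = C := by
        ext z
        simp [ev, Polynomial.algebraMap_apply]
      have h3 : ev (Zp f) = C x + C (f.eval x) * X := by
        simp [ev, Zp]
      rw [h1, h2, h3]; rfl
    have hT : X ^ l ∣ ev (Th f u c a v) := by
      rw [X_pow_dvd_iff]
      intro k hk
      simp only [ev, coe_mapRingHom, coeff_map, hcoef k hk, map_zero]
    have hfu : f.comp (C x + C (f.eval x) * X) = C (f.eval x) * ev u := by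
      rw [← hevZ, hu, map_mul]; simp [ev]
    have hXq : X ^ l ∣ (C x + C (f.eval x) * X) ^ q - C x := by
      have h1 : (C x + C (f.eval x) * X) ^ q = C x + C (f.eval x) * X ^ q := by
        rw [hq, ← FiniteField.expand_card]; simp
      rw [h1, add_sub_cancel_left]
      exact Dvd.dvd.mul_left (pow_dvd_pow _ hl) _
    have hdiff : X ^ l ∣ R.comp (C x + C (f.eval x) * X) - ev (Th f u c a v) := by
      rw [hR, Th, map_sum, Polynomial.sum_comp, ← Finset.sum_sub_distrib]
      refine Finset.dvd_sum fun j _ => ?_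
      have e1 : ev (C (C a)) = C a := by simp [ev]
      simp only [mul_comp, add_comp, pow_comp, X_comp, map_mul, map_add, map_pow, hevZ, hfu, e1]
      have e3 : (C (f.eval x) : F[X]) ^ c = C a := by rw [← C_pow, hxa]
      rw [mul_pow, e3]
      have hj : X ^ l ∣ (C x + C (f.eval x) * X) ^ ((j : ℕ) * q) - C x ^ (j : ℕ) := by
        rw [mul_comm (j : ℕ) q, pow_mul]
        exact hXq.trans (sub_dvd_pow_sub_pow _ _ _)
      obtain ⟨w, hw⟩ := hj
      have e5 : ev (C X) = C x := by simp [ev]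
      rw [e5]
      refine ⟨((v.1 j : F[X]).comp (C x + C (f.eval x) * X) +
        (v.2 j : F[X]).comp (C x + C (f.eval x) * X) * (C a * ev u ^ c)) * w, ?_⟩
      linear_combination ((v.1 j : F[X]).comp (C x + C (f.eval x) * X) +
        (v.2 j : F[X]).comp (C x + C (f.eval x) * X) * (C a * ev u ^ c)) * hw
    have := dvd_add hdiff hT
    rwa [sub_add_cancel] at this
  have hprod : ∏ x ∈ S, (X - C x) ^ l ∣ R := by
    refine Finset.prod_dvd_of_coprime ?_ hdvd
    intro x _ y _ hxy
    exact (isCoprime_X_sub_C_of_isUnit_sub (isUnit_iff_ne_zero.2 (sub_ne_zero.2 hxy))).pow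
  have := natDegree_le_of_dvd hprod hR0
  rw [natDegree_prod _ _ fun x _ => pow_ne_zero _ (X_sub_C_ne_zero x)] at this
  simp only [natDegree_pow, natDegree_X_sub_C, mul_one, Finset.sum_const, smul_eq_mul] at this
  rw [mul_comm]
  exact this.trans hdeg
lemma sqfree_taylor {f : F[X]} (hf : Squarefree f) (x : F) : Squarefree (taylor x f) := by
  intro g hg
  have h1 : taylorEquiv (-x) g * taylorEquiv (-x) g ∣ f := by
    have := map_dvd (taylorEquiv (-x)) hg
    rw [map_mul] at this
    have e : taylorEquiv (-x) (taylor x f) = f := by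
      have : taylorEquiv (-x) (taylor x f) = taylor (-x) (taylor x f) := rfl
      rw [this, taylor_taylor]; simp
    rwa [e] at this
  have h2 := hf _ h1
  exact (MulEquiv.isUnit_map (taylorEquiv (-x))).1 h2

lemma charsum_le_of_eval {f : F[X]} (hf0 : f.eval 0 ≠ 0) (hf : Squarefree f) (hd : 0 < f.natDegree)
    {m L : ℕ} (hm : f.natDegree ≤ m) (hL : 0 < L) (hodd : Fintype.card F % 2 = 1)
    (hq : 2 * (L * (L + 1 + 2 * L * m)) + m + 4 + 2 * L < Fintype.card F) :
    |∑ x : F, ((quadraticChar F (f.eval x) : ℤ) : ℝ)| ≤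
      (Fintype.card F : ℝ) * ((m + 3) / (2 * L)) + m := by
  set q := Fintype.card F with hqd
  have h2 : ringChar F ≠ 2 := fun h => by
    have := FiniteField.even_card_iff_char_two.1 h; omega
  have hf00 : f ≠ 0 := by rintro rfl; simp at hd
  have hb : ∀ a : F, (2 * L) * (Finset.univ.filter fun x : F => f.eval x ≠ 0 ∧
      f.eval x ^ (q / 2) = a).card ≤ (q - m - 1) / 2 + (q / 2) * f.natDegree + (L + 1) * q := by
    intro a
    refine stepanov_bound hf0 hf hd (c := q / 2) (D := (q - m - 1) / 2) (J := L + 1) (l := 2 * L)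
      (by omega) (by omega) (by omega) ?_ a
    have hDl : L * (L + 1 + 2 * L * m) < (q - m - 1) / 2 := by omega
    have h3 : 2 * L * f.natDegree ≤ 2 * L * m := Nat.mul_le_mul_left _ hm
    calc 2 * L * ((q - m - 1) / 2 + (L + 1) + 2 * L * f.natDegree)
        ≤ 2 * L * ((q - m - 1) / 2 + (L + 1) + 2 * L * m) := Nat.mul_le_mul_left _ (by omega)
      _ < 2 * (L + 1) * ((q - m - 1) / 2) := by nlinarith
  have hbR : ∀ a : F, 2 * ((Finset.univ.filter fun x : F => f.eval x ≠ 0 ∧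
      f.eval x ^ (q / 2) = a).card : ℝ) - q ≤ (q : ℝ) * ((m + 3) / (2 * L)) := by
    intro a
    have h := hb a
    set n := (Finset.univ.filter fun x : F => f.eval x ≠ 0 ∧ f.eval x ^ (q / 2) = a).card
    have h3 : 2 * (2 * L * n) ≤ q + q * m + 2 * ((L + 1) * q) := by
      have h4 : (q / 2) * f.natDegree ≤ (q / 2) * m := Nat.mul_le_mul_left _ hm
      have h5 : 2 * ((q / 2) * m) ≤ q * m := by
        rw [← mul_assoc]; exact Nat.mul_le_mul_right _ (by omega)
      omega
    have h6 : 2 * (2 * (L : ℝ) * n) ≤ q + q * m + 2 * ((L + 1) * q) := by exact_mod_cast h3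
    have hLR : (0 : ℝ) < L := by exact_mod_cast hL
    rw [← mul_div_assoc, le_div_iff₀ (by positivity)]
    nlinarith
  have hz : ((Finset.univ.filter fun x : F => f.eval x = 0).card : ℝ) ≤ m := by
    have : (Finset.univ.filter fun x : F => f.eval x = 0).card ≤ f.natDegree := by
      refine (Finset.card_le_card ?_).trans ((Multiset.toFinset_card_le _).trans (card_roots' f))
      intro x hx
      simpa [hf00, IsRoot] using hx
    exact_mod_cast this.trans hm
  have hne : (1 : F) ≠ -1 := (Ring.neg_one_ne_one_of_char_ne_two h2).symm
  have hpt : ∀ (σ : ℤ), σ = 1 ∨ σ = -1 → ∀ x : F, (σ : ℝ) * ((quadraticChar F (f.eval x) : ℤ) : ℝ) =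
      2 * (if f.eval x ≠ 0 ∧ f.eval x ^ (q / 2) = (σ : F) then 1 else 0) - 1
        + (if f.eval x = 0 then 1 else 0) := by
    intro σ hσ x
    by_cases h0 : f.eval x = 0
    · simp [h0]
    · have hp := quadraticChar_eq_pow_of_char_ne_two' h2 (f.eval x)
      rw [← hqd] at hp
      rcases quadraticChar_dichotomy h0 with h | h <;> rcases hσ with rfl | rfl <;>
        rw [h] at hp <;> simp [h, h0, ← hp, hne, hne.symm] <;> norm_num
  have hsum : ∀ (σ : ℤ), σ = 1 ∨ σ = -1 →
      (σ : ℝ) * ∑ x : F, ((quadraticChar F (f.eval x) : ℤ) : ℝ) ≤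
        (q : ℝ) * ((m + 3) / (2 * L)) + m := by
    intro σ hσ
    rw [Finset.mul_sum, Finset.sum_congr rfl fun x _ => hpt σ hσ x, Finset.sum_add_distrib,
      Finset.sum_sub_distrib, ← Finset.mul_sum, Finset.sum_boole, Finset.sum_boole]
    have := hbR (σ : F)
    simp only [Finset.sum_const, Finset.card_univ, nsmul_eq_mul, mul_one]
    rw [← hqd]
    linarith
  have p1 := hsum 1 (Or.inl rfl)
  have p2 := hsum (-1) (Or.inr rfl)
  push_cast at p1 p2
  rw [abs_le]
  constructor <;> linarith

end Stepanov

/-- A weak form of the Weil bound for quadratic character sums. -/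
theorem weak_weil (m : ℕ) (ε : ℝ) (hε : 0 < ε) : ∃ N : ℕ, ∀ (F : Type) [Field F] [Fintype F],
    N < Fintype.card F → Fintype.card F % 2 = 1 → ∀ f : F[X], Squarefree f → 0 < f.natDegree →
    f.natDegree ≤ m →
    |∑ x : F, ((quadraticChar F (f.eval x) : ℤ) : ℝ)| ≤ ε * Fintype.card F := by
  obtain ⟨L, hL⟩ := exists_nat_gt ((m + 3) / ε)
  have hL0 : (0 : ℝ) < L := lt_of_le_of_lt (by positivity) hL
  obtain ⟨N1, hN1⟩ := exists_nat_gt (2 * m / ε)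
  refine ⟨N1 + (2 * (L * (L + 1 + 2 * L * m)) + m + 4 + 2 * L), ?_⟩
  intro F _ _ hN hodd f hf hd hm
  have hf00 : f ≠ 0 := by rintro rfl; simp at hd
  obtain ⟨x0, hx0⟩ : ∃ x0, f.eval x0 ≠ 0 := by
    by_contra! hcon
    apply hf00
    apply eq_zero_of_natDegree_lt_card_of_eval_eq_zero f (Function.injective_id (α := F))
    · exact hcon
    · omega
  have key := charsum_le_of_eval (f := taylor x0 f) (by simpa [taylor_eval] using hx0)
    (sqfree_taylor hf x0) (by simpa using hd) (m := m) (L := L) (by simpa using hm)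
    (by exact_mod_cast hL0) hodd (by omega)
  have e : ∑ x : F, ((quadraticChar F ((taylor x0 f).eval x) : ℤ) : ℝ) =
      ∑ x : F, ((quadraticChar F (f.eval x) : ℤ) : ℝ) := by
    rw [← Equiv.sum_comp (Equiv.addRight x0) (fun x => ((quadraticChar F (f.eval x) : ℤ) : ℝ))]
    exact Finset.sum_congr rfl fun x _ => by simp [taylor_eval]
  rw [e] at key
  refine key.trans ?_
  have hq : (N1 : ℝ) ≤ Fintype.card F := by exact_mod_cast (by omega)
  have hqm : 2 * (m : ℝ) ≤ ε * Fintype.card F := by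
    have := (div_lt_iff₀ hε).1 hN1
    nlinarith
  have h1 : ((m : ℝ) + 3) / (2 * L) ≤ ε / 2 := by
    rw [div_lt_iff₀ hε] at hL
    rw [div_le_div_iff₀ (by positivity) (by norm_num)]
    nlinarith
  have h2 : (Fintype.card F : ℝ) * (((m : ℝ) + 3) / (2 * L)) ≤ Fintype.card F * (ε / 2) :=
    mul_le_mul_of_nonneg_left h1 (by positivity)
  linarith

section Polys
set_option linter.unusedVariables false
set_option linter.unusedSimpArgs false

/-- the seventeen polynomials -/
def pv {R : Type} [CommRing R] (k : Fin 17) (x y : R) : R :=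
  ![x,
    -x + 1,
    x - y,
    x*y - x + y,
    x*y + x - y,
    x - y + 1,
    x - y - 1,
    x + y^2 - 2*y,
    2*x*y - x - y^2,
    x^2 - 2*x*y + y,
    x^2 - 2*x + y,
    x^2*y - x^2 + x*y - y^2,
    x^2 - x*y^2 - x*y + y^2,
    x^2 - x*y + y^2 - y,
    x^2 - x*y - x + y^2, y, 1 - y] k

/-- factors of the resultants -/
def fv {R : Type} [CommRing R] (k : Fin 29) (y : R) : R :=
  ![y,
    y - 1,
    y + 1,
    y - 2,
    2*y - 1,
    y^2 - y + 1,
    y^2 - y - 1,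
    y^2 + y - 1,
    y^2 + y + 1,
    y^2 - 3*y + 1,
    3*y^2 - 3*y + 1,
    y^2 - 3*y + 3,
    y^2 + 1,
    y^3 - 3*y^2 + 2*y - 1,
    y^3 + y^2 - 1,
    y - 3,
    4*y - 3,
    2*y^2 - 2*y + 1,
    y^3 - 2*y^2 + y - 1,
    y^3 - y - 1,
    2*y - 3,
    y + 3,
    y^3 - 2*y^2 + 3*y - 1,
    3*y - 1,
    3*y - 4,
    y^3 - y^2 + 2*y - 1,
    y^2 - 2*y + 2,
    3*y - 2,
    3*y + 1] k

section
variable {R : Type} [CommRing R]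
lemma pv_0 (x y : R) : pv 0 x y = x := rfl
lemma pv_1 (x y : R) : pv 1 x y = -x + 1 := rfl
lemma pv_2 (x y : R) : pv 2 x y = x - y := rfl
lemma pv_3 (x y : R) : pv 3 x y = x*y - x + y := rfl
lemma pv_4 (x y : R) : pv 4 x y = x*y + x - y := rfl
lemma pv_5 (x y : R) : pv 5 x y = x - y + 1 := rfl
lemma pv_6 (x y : R) : pv 6 x y = x - y - 1 := rfl
lemma pv_7 (x y : R) : pv 7 x y = x + y^2 - 2*y := rfl
lemma pv_8 (x y : R) : pv 8 x y = 2*x*y - x - y^2 := rfl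
lemma pv_9 (x y : R) : pv 9 x y = x^2 - 2*x*y + y := rfl
lemma pv_10 (x y : R) : pv 10 x y = x^2 - 2*x + y := rfl
lemma pv_11 (x y : R) : pv 11 x y = x^2*y - x^2 + x*y - y^2 := rfl
lemma pv_12 (x y : R) : pv 12 x y = x^2 - x*y^2 - x*y + y^2 := rfl
lemma pv_13 (x y : R) : pv 13 x y = x^2 - x*y + y^2 - y := rfl
lemma pv_14 (x y : R) : pv 14 x y = x^2 - x*y - x + y^2 := rfl
lemma pv_15 (x y : R) : pv 15 x y = y := rfl
lemma pv_16 (x y : R) : pv 16 x y = 1 - y := rfl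
lemma fv_0 (y : R) : fv 0 y = y := rfl
lemma fv_1 (y : R) : fv 1 y = y-1 := rfl
lemma fv_2 (y : R) : fv 2 y = y+1 := rfl
lemma fv_3 (y : R) : fv 3 y = y-2 := rfl
lemma fv_4 (y : R) : fv 4 y = 2*y-1 := rfl
lemma fv_5 (y : R) : fv 5 y = y^2-y+1 := rfl
lemma fv_6 (y : R) : fv 6 y = y^2-y-1 := rfl
lemma fv_7 (y : R) : fv 7 y = y^2+y-1 := rfl
lemma fv_8 (y : R) : fv 8 y = y^2+y+1 := rfl
lemma fv_9 (y : R) : fv 9 y = y^2-3*y+1 := rfl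
lemma fv_10 (y : R) : fv 10 y = 3*y^2-3*y+1 := rfl
lemma fv_11 (y : R) : fv 11 y = y^2-3*y+3 := rfl
lemma fv_12 (y : R) : fv 12 y = y^2+1 := rfl
lemma fv_13 (y : R) : fv 13 y = y^3-3*y^2+2*y-1 := rfl
lemma fv_14 (y : R) : fv 14 y = y^3+y^2-1 := rfl
lemma fv_15 (y : R) : fv 15 y = y-3 := rfl
lemma fv_16 (y : R) : fv 16 y = 4*y-3 := rfl
lemma fv_17 (y : R) : fv 17 y = 2*y^2-2*y+1 := rfl
lemma fv_18 (y : R) : fv 18 y = y^3-2*y^2+y-1 := rfl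
lemma fv_19 (y : R) : fv 19 y = y^3-y-1 := rfl
lemma fv_20 (y : R) : fv 20 y = 2*y-3 := rfl
lemma fv_21 (y : R) : fv 21 y = y+3 := rfl
lemma fv_22 (y : R) : fv 22 y = y^3-2*y^2+3*y-1 := rfl
lemma fv_23 (y : R) : fv 23 y = 3*y-1 := rfl
lemma fv_24 (y : R) : fv 24 y = 3*y-4 := rfl
lemma fv_25 (y : R) : fv 25 y = y^3-y^2+2*y-1 := rfl
lemma fv_26 (y : R) : fv 26 y = y^2-2*y+2 := rfl
lemma fv_27 (y : R) : fv 27 y = 3*y-2 := rfl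
lemma fv_28 (y : R) : fv 28 y = 3*y+1 := rfl

lemma cop {p q : R} (A B : R) {r : R} (hr : IsUnit r) (h : A * p + B * q = r) : IsCoprime p q := by
  obtain ⟨u, rfl⟩ := hr
  exact ⟨↑u⁻¹ * A, ↑u⁻¹ * B, by rw [mul_assoc, mul_assoc, ← mul_add, h]; simp⟩

/-- all factors are units -/
def GU (y : R) : Prop := IsUnit (2 : R) ∧ ∀ i, IsUnit (fv i y)

variable {x y : R}

lemma cop_0_1 (h : GU y) : IsCoprime (pv 0 x y) (pv 1 x y) :=
  cop (1) (1) isUnit_one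
    (by simp only [pv_0, pv_1]; ring)
lemma cop_0_2 (h : GU y) : IsCoprime (pv 0 x y) (pv 2 x y) :=
  cop (-1) (1) ((h.2 0).mul isUnit_one.neg)
    (by simp only [pv_0, pv_2, fv_0]; ring)
lemma cop_1_2 (h : GU y) : IsCoprime (pv 1 x y) (pv 2 x y) :=
  cop (-1) (-1) (h.2 1)
    (by simp only [pv_1, pv_2, fv_1]; ring)
lemma cop_0_3 (h : GU y) : IsCoprime (pv 0 x y) (pv 3 x y) :=
  cop (-y + 1) (1) (h.2 0)
    (by simp only [pv_0, pv_3, fv_0]; ring)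
lemma cop_1_3 (h : GU y) : IsCoprime (pv 1 x y) (pv 3 x y) :=
  cop (-y + 1) (-1) ((h.2 4).mul isUnit_one.neg)
    (by simp only [pv_1, pv_3, fv_4]; ring)
lemma cop_2_3 (h : GU y) : IsCoprime (pv 2 x y) (pv 3 x y) :=
  cop (-y + 1) (1) ((h.2 0).pow 2)
    (by simp only [pv_2, pv_3, fv_0]; ring)
lemma cop_0_4 (h : GU y) : IsCoprime (pv 0 x y) (pv 4 x y) :=
  cop (-y - 1) (1) ((h.2 0).mul isUnit_one.neg)
    (by simp only [pv_0, pv_4, fv_0]; ring)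
lemma cop_1_4 (h : GU y) : IsCoprime (pv 1 x y) (pv 4 x y) :=
  cop (-y - 1) (-1) isUnit_one.neg
    (by simp only [pv_1, pv_4]; ring)
lemma cop_2_4 (h : GU y) : IsCoprime (pv 2 x y) (pv 4 x y) :=
  cop (-y - 1) (1) ((h.2 0).pow 2)
    (by simp only [pv_2, pv_4, fv_0]; ring)
lemma cop_3_4 (h : GU y) : IsCoprime (pv 3 x y) (pv 4 x y) :=
  cop (-y - 1) (y - 1) ((((h.2 0).pow 2).mul isUnit_one.neg).mul (h.1.pow 1))
    (by simp only [pv_3, pv_4, fv_0]; ring)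
lemma cop_0_5 (h : GU y) : IsCoprime (pv 0 x y) (pv 5 x y) :=
  cop (-1) (1) ((h.2 1).mul isUnit_one.neg)
    (by simp only [pv_0, pv_5, fv_1]; ring)
lemma cop_1_5 (h : GU y) : IsCoprime (pv 1 x y) (pv 5 x y) :=
  cop (-1) (-1) (h.2 3)
    (by simp only [pv_1, pv_5, fv_3]; ring)
lemma cop_2_5 (h : GU y) : IsCoprime (pv 2 x y) (pv 5 x y) :=
  cop (-1) (1) isUnit_one
    (by simp only [pv_2, pv_5]; ring)
lemma cop_3_5 (h : GU y) : IsCoprime (pv 3 x y) (pv 5 x y) :=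
  cop (-1) (y - 1) ((h.2 5).mul isUnit_one.neg)
    (by simp only [pv_3, pv_5, fv_5]; ring)
lemma cop_4_5 (h : GU y) : IsCoprime (pv 4 x y) (pv 5 x y) :=
  cop (-1) (y + 1) ((h.2 6).mul isUnit_one.neg)
    (by simp only [pv_4, pv_5, fv_6]; ring)
lemma cop_0_6 (h : GU y) : IsCoprime (pv 0 x y) (pv 6 x y) :=
  cop (-1) (1) ((h.2 2).mul isUnit_one.neg)
    (by simp only [pv_0, pv_6, fv_2]; ring)
lemma cop_1_6 (h : GU y) : IsCoprime (pv 1 x y) (pv 6 x y) :=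
  cop (-1) (-1) (h.2 0)
    (by simp only [pv_1, pv_6, fv_0]; ring)
lemma cop_2_6 (h : GU y) : IsCoprime (pv 2 x y) (pv 6 x y) :=
  cop (-1) (1) isUnit_one.neg
    (by simp only [pv_2, pv_6]; ring)
lemma cop_3_6 (h : GU y) : IsCoprime (pv 3 x y) (pv 6 x y) :=
  cop (-1) (y - 1) ((h.2 7).mul isUnit_one.neg)
    (by simp only [pv_3, pv_6, fv_7]; ring)
lemma cop_4_6 (h : GU y) : IsCoprime (pv 4 x y) (pv 6 x y) :=
  cop (-1) (y + 1) ((h.2 8).mul isUnit_one.neg)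
    (by simp only [pv_4, pv_6, fv_8]; ring)
lemma cop_5_6 (h : GU y) : IsCoprime (pv 5 x y) (pv 6 x y) :=
  cop (-1) (1) (isUnit_one.neg.mul (h.1.pow 1))
    (by simp only [pv_5, pv_6]; ring)
lemma cop_0_7 (h : GU y) : IsCoprime (pv 0 x y) (pv 7 x y) :=
  cop (-1) (1) ((h.2 0).mul (h.2 3))
    (by simp only [pv_0, pv_7, fv_0, fv_3]; ring)
lemma cop_1_7 (h : GU y) : IsCoprime (pv 1 x y) (pv 7 x y) :=
  cop (-1) (-1) (((h.2 1).pow 2).mul isUnit_one.neg)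
    (by simp only [pv_1, pv_7, fv_1]; ring)
lemma cop_2_7 (h : GU y) : IsCoprime (pv 2 x y) (pv 7 x y) :=
  cop (-1) (1) ((h.2 0).mul (h.2 1))
    (by simp only [pv_2, pv_7, fv_0, fv_1]; ring)
lemma cop_3_7 (h : GU y) : IsCoprime (pv 3 x y) (pv 7 x y) :=
  cop (-1) (y - 1) ((h.2 0).mul (h.2 9))
    (by simp only [pv_3, pv_7, fv_0, fv_9]; ring)
lemma cop_4_7 (h : GU y) : IsCoprime (pv 4 x y) (pv 7 x y) :=
  cop (-1) (y + 1) ((h.2 0).mul (h.2 6))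
    (by simp only [pv_4, pv_7, fv_0, fv_6]; ring)
lemma cop_5_7 (h : GU y) : IsCoprime (pv 5 x y) (pv 7 x y) :=
  cop (-1) (1) (h.2 6)
    (by simp only [pv_5, pv_7, fv_6]; ring)
lemma cop_6_7 (h : GU y) : IsCoprime (pv 6 x y) (pv 7 x y) :=
  cop (-1) (1) (h.2 5)
    (by simp only [pv_6, pv_7, fv_5]; ring)
lemma cop_0_8 (h : GU y) : IsCoprime (pv 0 x y) (pv 8 x y) :=
  cop (-2*y + 1) (1) (((h.2 0).pow 2).mul isUnit_one.neg)
    (by simp only [pv_0, pv_8, fv_0]; ring)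
lemma cop_1_8 (h : GU y) : IsCoprime (pv 1 x y) (pv 8 x y) :=
  cop (-2*y + 1) (-1) ((h.2 1).pow 2)
    (by simp only [pv_1, pv_8, fv_1]; ring)
lemma cop_2_8 (h : GU y) : IsCoprime (pv 2 x y) (pv 8 x y) :=
  cop (-2*y + 1) (1) ((h.2 0).mul (h.2 1))
    (by simp only [pv_2, pv_8, fv_0, fv_1]; ring)
lemma cop_3_8 (h : GU y) : IsCoprime (pv 3 x y) (pv 8 x y) :=
  cop (-2*y + 1) (y - 1) (((h.2 0).mul (h.2 7)).mul isUnit_one.neg)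
    (by simp only [pv_3, pv_8, fv_0, fv_7]; ring)
lemma cop_4_8 (h : GU y) : IsCoprime (pv 4 x y) (pv 8 x y) :=
  cop (-2*y + 1) (y + 1) (((h.2 0).mul (h.2 5)).mul isUnit_one.neg)
    (by simp only [pv_4, pv_8, fv_0, fv_5]; ring)
lemma cop_5_8 (h : GU y) : IsCoprime (pv 5 x y) (pv 8 x y) :=
  cop (-2*y + 1) (1) (h.2 9)
    (by simp only [pv_5, pv_8, fv_9]; ring)
lemma cop_6_8 (h : GU y) : IsCoprime (pv 6 x y) (pv 8 x y) :=
  cop (-2*y + 1) (1) (h.2 7)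
    (by simp only [pv_6, pv_8, fv_7]; ring)
lemma cop_7_8 (h : GU y) : IsCoprime (pv 7 x y) (pv 8 x y) :=
  cop (-2*y + 1) (1) ((((h.2 0).mul ((h.2 1).pow 2)).mul isUnit_one.neg).mul (h.1.pow 1))
    (by simp only [pv_7, pv_8, fv_0, fv_1]; ring)
lemma cop_0_9 (h : GU y) : IsCoprime (pv 0 x y) (pv 9 x y) :=
  cop (-x + 2*y) (1) (h.2 0)
    (by simp only [pv_0, pv_9, fv_0]; ring)
lemma cop_1_9 (h : GU y) : IsCoprime (pv 1 x y) (pv 9 x y) :=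
  cop (x - 2*y + 1) (1) ((h.2 1).mul isUnit_one.neg)
    (by simp only [pv_1, pv_9, fv_1]; ring)
lemma cop_2_9 (h : GU y) : IsCoprime (pv 2 x y) (pv 9 x y) :=
  cop (-x + y) (1) (((h.2 0).mul (h.2 1)).mul isUnit_one.neg)
    (by simp only [pv_2, pv_9, fv_0, fv_1]; ring)
lemma cop_3_9 (h : GU y) : IsCoprime (pv 3 x y) (pv 9 x y) :=
  cop (-x*y + x + 2*y^2 - y) (y^2 - 2*y + 1) ((h.2 0).mul (h.2 10))
    (by simp only [pv_3, pv_9, fv_0, fv_10]; ring)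
lemma cop_4_9 (h : GU y) : IsCoprime (pv 4 x y) (pv 9 x y) :=
  cop (-x*y - x + 2*y^2 + y) (y^2 + 2*y + 1) (((h.2 0).mul (h.2 6)).mul isUnit_one.neg)
    (by simp only [pv_4, pv_9, fv_0, fv_6]; ring)
lemma cop_5_9 (h : GU y) : IsCoprime (pv 5 x y) (pv 9 x y) :=
  cop (-x + y + 1) (1) ((h.2 6).mul isUnit_one.neg)
    (by simp only [pv_5, pv_9, fv_6]; ring)
lemma cop_6_9 (h : GU y) : IsCoprime (pv 6 x y) (pv 9 x y) :=
  cop (-x + y - 1) (1) ((h.2 6).mul isUnit_one.neg)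
    (by simp only [pv_6, pv_9, fv_6]; ring)
lemma cop_7_9 (h : GU y) : IsCoprime (pv 7 x y) (pv 9 x y) :=
  cop (-x + y^2) (1) (((h.2 0).mul (h.2 1)).mul (h.2 6))
    (by simp only [pv_7, pv_9, fv_0, fv_1, fv_6]; ring)
lemma cop_8_9 (h : GU y) : IsCoprime (pv 8 x y) (pv 9 x y) :=
  cop (-2*x*y + x + 3*y^2 - 2*y) (4*y^2 - 4*y + 1) ((((h.2 0).mul (h.2 1)).mul (h.2 10)).mul isUnit_one.neg)
    (by simp only [pv_8, pv_9, fv_0, fv_1, fv_10]; ring)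
lemma cop_0_10 (h : GU y) : IsCoprime (pv 0 x y) (pv 10 x y) :=
  cop (-x + 2) (1) (h.2 0)
    (by simp only [pv_0, pv_10, fv_0]; ring)
lemma cop_1_10 (h : GU y) : IsCoprime (pv 1 x y) (pv 10 x y) :=
  cop (x - 1) (1) (h.2 1)
    (by simp only [pv_1, pv_10, fv_1]; ring)
lemma cop_2_10 (h : GU y) : IsCoprime (pv 2 x y) (pv 10 x y) :=
  cop (-x - y + 2) (1) ((h.2 0).mul (h.2 1))
    (by simp only [pv_2, pv_10, fv_0, fv_1]; ring)
lemma cop_3_10 (h : GU y) : IsCoprime (pv 3 x y) (pv 10 x y) :=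
  cop (-x*y + x + 3*y - 2) (y^2 - 2*y + 1) ((h.2 0).mul (h.2 7))
    (by simp only [pv_3, pv_10, fv_0, fv_7]; ring)
lemma cop_4_10 (h : GU y) : IsCoprime (pv 4 x y) (pv 10 x y) :=
  cop (-x*y - x + y + 2) (y^2 + 2*y + 1) ((h.2 0).mul (h.2 7))
    (by simp only [pv_4, pv_10, fv_0, fv_7]; ring)
lemma cop_5_10 (h : GU y) : IsCoprime (pv 5 x y) (pv 10 x y) :=
  cop (-x - y + 3) (1) (h.2 11)
    (by simp only [pv_5, pv_10, fv_11]; ring)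
lemma cop_6_10 (h : GU y) : IsCoprime (pv 6 x y) (pv 10 x y) :=
  cop (-x - y + 1) (1) (h.2 7)
    (by simp only [pv_6, pv_10, fv_7]; ring)
lemma cop_7_10 (h : GU y) : IsCoprime (pv 7 x y) (pv 10 x y) :=
  cop (-x + y^2 - 2*y + 2) (1) (((h.2 0).mul (h.2 1)).mul (h.2 11))
    (by simp only [pv_7, pv_10, fv_0, fv_1, fv_11]; ring)
lemma cop_8_10 (h : GU y) : IsCoprime (pv 8 x y) (pv 10 x y) :=
  cop (-2*x*y + x - y^2 + 4*y - 2) (4*y^2 - 4*y + 1) (((h.2 0).mul (h.2 1)).mul (h.2 7))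
    (by simp only [pv_8, pv_10, fv_0, fv_1, fv_7]; ring)
lemma cop_9_10 (h : GU y) : IsCoprime (pv 9 x y) (pv 10 x y) :=
  cop (x - 2) (-x + 2*y) (((h.2 0).mul (h.2 1)).mul (h.1.pow 1))
    (by simp only [pv_9, pv_10, fv_0, fv_1]; ring)
lemma cop_0_11 (h : GU y) : IsCoprime (pv 0 x y) (pv 11 x y) :=
  cop (-x*y + x - y) (1) (((h.2 0).pow 2).mul isUnit_one.neg)
    (by simp only [pv_0, pv_11, fv_0]; ring)
lemma cop_1_11 (h : GU y) : IsCoprime (pv 1 x y) (pv 11 x y) :=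
  cop (x*y - x + 2*y - 1) (1) (((h.2 1).pow 2).mul isUnit_one.neg)
    (by simp only [pv_1, pv_11, fv_1]; ring)
lemma cop_2_11 (h : GU y) : IsCoprime (pv 2 x y) (pv 11 x y) :=
  cop (-x*y + x - y^2) (1) (((h.2 0).pow 2).mul (h.2 1))
    (by simp only [pv_2, pv_11, fv_0, fv_1]; ring)
lemma cop_3_11 (h : GU y) : IsCoprime (pv 3 x y) (pv 11 x y) :=
  cop (-x) (1) (((h.2 0).pow 2).mul isUnit_one.neg)
    (by simp only [pv_3, pv_11, fv_0]; ring)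
lemma cop_4_11 (h : GU y) : IsCoprime (pv 4 x y) (pv 11 x y) :=
  cop (-x*y^2 + x - 2*y^2) (y^2 + 2*y + 1) ((((h.2 0).pow 2).mul (h.2 12)).mul isUnit_one.neg)
    (by simp only [pv_4, pv_11, fv_0, fv_12]; ring)
lemma cop_5_11 (h : GU y) : IsCoprime (pv 5 x y) (pv 11 x y) :=
  cop (-x*y + x - y^2 + y - 1) (1) (h.2 13)
    (by simp only [pv_5, pv_11, fv_13]; ring)
lemma cop_6_11 (h : GU y) : IsCoprime (pv 6 x y) (pv 11 x y) :=
  cop (-x*y + x - y^2 - y + 1) (1) (h.2 14)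
    (by simp only [pv_6, pv_11, fv_14]; ring)
lemma cop_7_11 (h : GU y) : IsCoprime (pv 7 x y) (pv 11 x y) :=
  cop (-x*y + x + y^3 - 3*y^2 + y) (1) ((((h.2 0).pow 2).mul ((h.2 1).pow 2)).mul (h.2 15))
    (by simp only [pv_7, pv_11, fv_0, fv_1, fv_15]; ring)
lemma cop_8_11 (h : GU y) : IsCoprime (pv 8 x y) (pv 11 x y) :=
  cop (-2*x*y^2 + 3*x*y - x - y^3 - y^2 + y) (4*y^2 - 4*y + 1) (((h.2 0).pow 2).mul ((h.2 1).pow 3))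
    (by simp only [pv_8, pv_11, fv_0, fv_1]; ring)
lemma cop_9_11 (h : GU y) : IsCoprime (pv 9 x y) (pv 11 x y) :=
  cop (x*y - x + 2*y - 1) (-x + 2*y - 1) ((((h.2 0).mul (h.2 1)).mul (h.2 4)).mul isUnit_one.neg)
    (by simp only [pv_9, pv_11, fv_0, fv_1, fv_4]; ring)
lemma cop_10_11 (h : GU y) : IsCoprime (pv 10 x y) (pv 11 x y) :=
  cop (3*x*y^2 - 5*x*y + 2*x + 2*y^3 - y) (-3*x*y + 2*x - 2*y^2 + 7*y - 4) ((((h.2 0).pow 2).mul (h.2 1)).mul (h.2 16))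
    (by simp only [pv_10, pv_11, fv_0, fv_1, fv_16]; ring)
lemma cop_0_12 (h : GU y) : IsCoprime (pv 0 x y) (pv 12 x y) :=
  cop (-x + y^2 + y) (1) ((h.2 0).pow 2)
    (by simp only [pv_0, pv_12, fv_0]; ring)
lemma cop_1_12 (h : GU y) : IsCoprime (pv 1 x y) (pv 12 x y) :=
  cop (x - y^2 - y + 1) (1) ((h.2 1).mul isUnit_one.neg)
    (by simp only [pv_1, pv_12, fv_1]; ring)
lemma cop_2_12 (h : GU y) : IsCoprime (pv 2 x y) (pv 12 x y) :=
  cop (-x + y^2) (1) ((((h.2 0).pow 2).mul (h.2 1)).mul isUnit_one.neg)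
    (by simp only [pv_2, pv_12, fv_0, fv_1]; ring)
lemma cop_3_12 (h : GU y) : IsCoprime (pv 3 x y) (pv 12 x y) :=
  cop (-x*y + x + y^3) (y^2 - 2*y + 1) (((h.2 0).pow 2).mul (h.2 17))
    (by simp only [pv_3, pv_12, fv_0, fv_17]; ring)
lemma cop_4_12 (h : GU y) : IsCoprime (pv 4 x y) (pv 12 x y) :=
  cop (-x*y - x + y^3 + 2*y^2) (y^2 + 2*y + 1) ((h.2 0).pow 2)
    (by simp only [pv_4, pv_12, fv_0]; ring)
lemma cop_5_12 (h : GU y) : IsCoprime (pv 5 x y) (pv 12 x y) :=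
  cop (-x + y^2 + 1) (1) ((h.2 18).mul isUnit_one.neg)
    (by simp only [pv_5, pv_12, fv_18]; ring)
lemma cop_6_12 (h : GU y) : IsCoprime (pv 6 x y) (pv 12 x y) :=
  cop (-x + y^2 - 1) (1) ((h.2 19).mul isUnit_one.neg)
    (by simp only [pv_6, pv_12, fv_19]; ring)
lemma cop_7_12 (h : GU y) : IsCoprime (pv 7 x y) (pv 12 x y) :=
  cop (-x + 2*y^2 - y) (1) ((((h.2 0).pow 2).mul (h.2 1)).mul (h.2 20))
    (by simp only [pv_7, pv_12, fv_0, fv_1, fv_20]; ring)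
lemma cop_8_12 (h : GU y) : IsCoprime (pv 8 x y) (pv 12 x y) :=
  cop (-2*x*y + x + 2*y^3 - y) (4*y^2 - 4*y + 1) (((((h.2 0).pow 2).mul (h.2 1)).mul (h.2 17)).mul isUnit_one.neg)
    (by simp only [pv_8, pv_12, fv_0, fv_1, fv_17]; ring)
lemma cop_9_12 (h : GU y) : IsCoprime (pv 9 x y) (pv 12 x y) :=
  cop (-x + y^2 + y - 1) (x - 2*y + 1) (((h.2 0).mul ((h.2 1).pow 2)).mul isUnit_one.neg)
    (by simp only [pv_9, pv_12, fv_0, fv_1]; ring)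
lemma cop_10_12 (h : GU y) : IsCoprime (pv 10 x y) (pv 12 x y) :=
  cop (-x*y - 2*x + y^3 + 3*y^2 + y) (x*y + 2*x - y - 4) ((((h.2 0).pow 2).mul (h.2 1)).mul (h.2 21))
    (by simp only [pv_10, pv_12, fv_0, fv_1, fv_21]; ring)
lemma cop_11_12 (h : GU y) : IsCoprime (pv 11 x y) (pv 12 x y) :=
  cop (-x + y^2 + y - 1) (x*y - x + 2*y - 1) ((((h.2 0).pow 3).mul (h.2 1)).mul isUnit_one.neg)
    (by simp only [pv_11, pv_12, fv_0, fv_1]; ring)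
lemma cop_0_13 (h : GU y) : IsCoprime (pv 0 x y) (pv 13 x y) :=
  cop (-x + y) (1) ((h.2 0).mul (h.2 1))
    (by simp only [pv_0, pv_13, fv_0, fv_1]; ring)
lemma cop_1_13 (h : GU y) : IsCoprime (pv 1 x y) (pv 13 x y) :=
  cop (x - y + 1) (1) ((h.2 1).pow 2)
    (by simp only [pv_1, pv_13, fv_1]; ring)
lemma cop_2_13 (h : GU y) : IsCoprime (pv 2 x y) (pv 13 x y) :=
  cop (-x) (1) ((h.2 0).mul (h.2 1))
    (by simp only [pv_2, pv_13, fv_0, fv_1]; ring)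
lemma cop_3_13 (h : GU y) : IsCoprime (pv 3 x y) (pv 13 x y) :=
  cop (-x*y + x + y^2) (y^2 - 2*y + 1) ((h.2 0).mul (h.2 22))
    (by simp only [pv_3, pv_13, fv_0, fv_22]; ring)
lemma cop_4_13 (h : GU y) : IsCoprime (pv 4 x y) (pv 13 x y) :=
  cop (-x*y - x + y^2) (y^2 + 2*y + 1) ((h.2 0).mul (h.2 19))
    (by simp only [pv_4, pv_13, fv_0, fv_19]; ring)
lemma cop_5_13 (h : GU y) : IsCoprime (pv 5 x y) (pv 13 x y) :=
  cop (-x + 1) (1) ((h.2 1).pow 2)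
    (by simp only [pv_5, pv_13, fv_1]; ring)
lemma cop_6_13 (h : GU y) : IsCoprime (pv 6 x y) (pv 13 x y) :=
  cop (-x - 1) (1) (h.2 12)
    (by simp only [pv_6, pv_13, fv_12]; ring)
lemma cop_7_13 (h : GU y) : IsCoprime (pv 7 x y) (pv 13 x y) :=
  cop (-x + y^2 - y) (1) ((h.2 0).mul ((h.2 1).pow 3))
    (by simp only [pv_7, pv_13, fv_0, fv_1]; ring)
lemma cop_8_13 (h : GU y) : IsCoprime (pv 8 x y) (pv 13 x y) :=
  cop (-2*x*y + x + y^2 - y) (4*y^2 - 4*y + 1) (((h.2 0).mul ((h.2 1).pow 2)).mul (h.2 23))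
    (by simp only [pv_8, pv_13, fv_0, fv_1, fv_23]; ring)
lemma cop_9_13 (h : GU y) : IsCoprime (pv 9 x y) (pv 13 x y) :=
  cop (x - 2*y + 2) (-x + 3*y - 2) (((h.2 0).mul (h.2 1)).mul (h.2 24))
    (by simp only [pv_9, pv_13, fv_0, fv_1, fv_24]; ring)
lemma cop_10_13 (h : GU y) : IsCoprime (pv 10 x y) (pv 13 x y) :=
  cop (-x) (x + y - 2) (((h.2 0).mul (h.2 1)).mul (h.2 3))
    (by simp only [pv_10, pv_13, fv_0, fv_1, fv_3]; ring)
lemma cop_11_13 (h : GU y) : IsCoprime (pv 11 x y) (pv 13 x y) :=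
  cop (-x*y + y - 1) (x*y^2 - x*y + y^3 - y^2 + 2*y - 1) (((h.2 0).mul ((h.2 1).pow 2)).mul (h.2 12))
    (by simp only [pv_11, pv_13, fv_0, fv_1, fv_12]; ring)
lemma cop_12_13 (h : GU y) : IsCoprime (pv 12 x y) (pv 13 x y) :=
  cop (x*y - y^2 + 1) (-x*y + y^3 + y^2 - 1) (((h.2 0).mul (h.2 1)).mul (h.2 19))
    (by simp only [pv_12, pv_13, fv_0, fv_1, fv_19]; ring)
lemma cop_0_14 (h : GU y) : IsCoprime (pv 0 x y) (pv 14 x y) :=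
  cop (-x + y + 1) (1) ((h.2 0).pow 2)
    (by simp only [pv_0, pv_14, fv_0]; ring)
lemma cop_1_14 (h : GU y) : IsCoprime (pv 1 x y) (pv 14 x y) :=
  cop (x - y) (1) ((h.2 0).mul (h.2 1))
    (by simp only [pv_1, pv_14, fv_0, fv_1]; ring)
lemma cop_2_14 (h : GU y) : IsCoprime (pv 2 x y) (pv 14 x y) :=
  cop (-x + 1) (1) ((h.2 0).mul (h.2 1))
    (by simp only [pv_2, pv_14, fv_0, fv_1]; ring)
lemma cop_3_14 (h : GU y) : IsCoprime (pv 3 x y) (pv 14 x y) :=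
  cop (-x*y + x + y^2 + y - 1) (y^2 - 2*y + 1) ((h.2 0).mul (h.2 25))
    (by simp only [pv_3, pv_14, fv_0, fv_25]; ring)
lemma cop_4_14 (h : GU y) : IsCoprime (pv 4 x y) (pv 14 x y) :=
  cop (-x*y - x + y^2 + y + 1) (y^2 + 2*y + 1) ((h.2 0).mul (h.2 14))
    (by simp only [pv_4, pv_14, fv_0, fv_14]; ring)
lemma cop_5_14 (h : GU y) : IsCoprime (pv 5 x y) (pv 14 x y) :=
  cop (-x + 2) (1) (h.2 26)
    (by simp only [pv_5, pv_14, fv_26]; ring)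
lemma cop_6_14 (h : GU y) : IsCoprime (pv 6 x y) (pv 14 x y) :=
  cop (-x) (1) ((h.2 0).pow 2)
    (by simp only [pv_6, pv_14, fv_0]; ring)
lemma cop_7_14 (h : GU y) : IsCoprime (pv 7 x y) (pv 14 x y) :=
  cop (-x + y^2 - y + 1) (1) (((h.2 0).mul (h.2 1)).mul (h.2 26))
    (by simp only [pv_7, pv_14, fv_0, fv_1, fv_26]; ring)
lemma cop_8_14 (h : GU y) : IsCoprime (pv 8 x y) (pv 14 x y) :=
  cop (-2*x*y + x + y^2 + y - 1) (4*y^2 - 4*y + 1) ((((h.2 0).pow 2).mul (h.2 1)).mul (h.2 27))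
    (by simp only [pv_8, pv_14, fv_0, fv_1, fv_27]; ring)
lemma cop_9_14 (h : GU y) : IsCoprime (pv 9 x y) (pv 14 x y) :=
  cop (x - 2*y - 1) (-x + 3*y) (((h.2 0).mul (h.2 1)).mul (h.2 28))
    (by simp only [pv_9, pv_14, fv_0, fv_1, fv_28]; ring)
lemma cop_10_14 (h : GU y) : IsCoprime (pv 10 x y) (pv 14 x y) :=
  cop (-x + 1) (x + y - 2) ((h.2 0).mul ((h.2 1).pow 2))
    (by simp only [pv_10, pv_14, fv_0, fv_1]; ring)
lemma cop_11_14 (h : GU y) : IsCoprime (pv 11 x y) (pv 14 x y) :=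
  cop (-x*y^2 - x*y + x + 2*y^2 - 1) (x*y^3 - 2*x*y + x + y^4 + y^2 - y) ((((h.2 0).pow 2).mul (h.2 1)).mul (h.2 14))
    (by simp only [pv_11, pv_14, fv_0, fv_1, fv_14]; ring)
lemma cop_12_14 (h : GU y) : IsCoprime (pv 12 x y) (pv 14 x y) :=
  cop (x - y - 1) (-x + y^2 + y) ((((h.2 0).pow 2).mul (h.2 1)).mul (h.2 2))
    (by simp only [pv_12, pv_14, fv_0, fv_1, fv_2]; ring)
lemma cop_13_14 (h : GU y) : IsCoprime (pv 13 x y) (pv 14 x y) :=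
  cop (-x + 1) (x) ((h.2 0).mul (h.2 1))
    (by simp only [pv_13, pv_14, fv_0, fv_1]; ring)
lemma cod_9 (h : GU y) : IsCoprime (pv 9 x y) (2*x - 2*y) :=
  cop (2) (-x + y) ((((h.2 0).mul (h.2 1)).mul isUnit_one.neg).mul (h.1.pow 1))
    (by simp only [pv_9, fv_0, fv_1]; ring)
lemma cod_10 (h : GU y) : IsCoprime (pv 10 x y) (2*x - 2) :=
  cop (2) (-x + 1) ((h.2 1).mul (h.1.pow 1))
    (by simp only [pv_10, fv_1]; ring)
lemma cod_11 (h : GU y) : IsCoprime (pv 11 x y) (2*x*y - 2*x + y) :=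
  cop (4*y - 4) (-2*x*y + 2*x - y) ((((h.2 0).pow 2).mul (h.2 16)).mul isUnit_one.neg)
    (by simp only [pv_11, fv_0, fv_16]; ring)
lemma cod_12 (h : GU y) : IsCoprime (pv 12 x y) (2*x - y^2 - y) :=
  cop (4) (-2*x + y^2 + y) (((((h.2 0).pow 2).mul (h.2 1)).mul (h.2 21)).mul isUnit_one.neg)
    (by simp only [pv_12, fv_0, fv_1, fv_21]; ring)
lemma cod_13 (h : GU y) : IsCoprime (pv 13 x y) (2*x - y) :=
  cop (4) (-2*x + y) ((h.2 0).mul (h.2 24))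
    (by simp only [pv_13, fv_0, fv_24]; ring)
lemma cod_14 (h : GU y) : IsCoprime (pv 14 x y) (2*x - y - 1) :=
  cop (4) (-2*x + y + 1) ((h.2 1).mul (h.2 28))
    (by simp only [pv_14, fv_1, fv_28]; ring)

lemma cop_lt (h : GU y) : ∀ k l : Fin 17, k < l → IsCoprime (pv k x y) (pv l x y) := by
  intro k l hkl
  match l, hkl with
  | ⟨0, _⟩, hkl =>
    match k, hkl with
    | ⟨n + 0, _⟩, hkl => exact absurd hkl (by simp [Fin.lt_def])
  | ⟨1, _⟩, hkl =>
    match k, hkl with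
    | ⟨0, _⟩, _ => exact cop_0_1 h
    | ⟨n + 1, _⟩, hkl => exact absurd hkl (by simp [Fin.lt_def])
  | ⟨2, _⟩, hkl =>
    match k, hkl with
    | ⟨0, _⟩, _ => exact cop_0_2 h
    | ⟨1, _⟩, _ => exact cop_1_2 h
    | ⟨n + 2, _⟩, hkl => exact absurd hkl (by simp [Fin.lt_def])
  | ⟨3, _⟩, hkl =>
    match k, hkl with
    | ⟨0, _⟩, _ => exact cop_0_3 h
    | ⟨1, _⟩, _ => exact cop_1_3 h
    | ⟨2, _⟩, _ => exact cop_2_3 h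
    | ⟨n + 3, _⟩, hkl => exact absurd hkl (by simp [Fin.lt_def])
  | ⟨4, _⟩, hkl =>
    match k, hkl with
    | ⟨0, _⟩, _ => exact cop_0_4 h
    | ⟨1, _⟩, _ => exact cop_1_4 h
    | ⟨2, _⟩, _ => exact cop_2_4 h
    | ⟨3, _⟩, _ => exact cop_3_4 h
    | ⟨n + 4, _⟩, hkl => exact absurd hkl (by simp [Fin.lt_def])
  | ⟨5, _⟩, hkl =>
    match k, hkl with
    | ⟨0, _⟩, _ => exact cop_0_5 h
    | ⟨1, _⟩, _ => exact cop_1_5 h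
    | ⟨2, _⟩, _ => exact cop_2_5 h
    | ⟨3, _⟩, _ => exact cop_3_5 h
    | ⟨4, _⟩, _ => exact cop_4_5 h
    | ⟨n + 5, _⟩, hkl => exact absurd hkl (by simp [Fin.lt_def])
  | ⟨6, _⟩, hkl =>
    match k, hkl with
    | ⟨0, _⟩, _ => exact cop_0_6 h
    | ⟨1, _⟩, _ => exact cop_1_6 h
    | ⟨2, _⟩, _ => exact cop_2_6 h
    | ⟨3, _⟩, _ => exact cop_3_6 h
    | ⟨4, _⟩, _ => exact cop_4_6 h
    | ⟨5, _⟩, _ => exact cop_5_6 h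
    | ⟨n + 6, _⟩, hkl => exact absurd hkl (by simp [Fin.lt_def])
  | ⟨7, _⟩, hkl =>
    match k, hkl with
    | ⟨0, _⟩, _ => exact cop_0_7 h
    | ⟨1, _⟩, _ => exact cop_1_7 h
    | ⟨2, _⟩, _ => exact cop_2_7 h
    | ⟨3, _⟩, _ => exact cop_3_7 h
    | ⟨4, _⟩, _ => exact cop_4_7 h
    | ⟨5, _⟩, _ => exact cop_5_7 h
    | ⟨6, _⟩, _ => exact cop_6_7 h
    | ⟨n + 7, _⟩, hkl => exact absurd hkl (by simp [Fin.lt_def])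
  | ⟨8, _⟩, hkl =>
    match k, hkl with
    | ⟨0, _⟩, _ => exact cop_0_8 h
    | ⟨1, _⟩, _ => exact cop_1_8 h
    | ⟨2, _⟩, _ => exact cop_2_8 h
    | ⟨3, _⟩, _ => exact cop_3_8 h
    | ⟨4, _⟩, _ => exact cop_4_8 h
    | ⟨5, _⟩, _ => exact cop_5_8 h
    | ⟨6, _⟩, _ => exact cop_6_8 h
    | ⟨7, _⟩, _ => exact cop_7_8 h
    | ⟨n + 8, _⟩, hkl => exact absurd hkl (by simp [Fin.lt_def])
  | ⟨9, _⟩, hkl =>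
    match k, hkl with
    | ⟨0, _⟩, _ => exact cop_0_9 h
    | ⟨1, _⟩, _ => exact cop_1_9 h
    | ⟨2, _⟩, _ => exact cop_2_9 h
    | ⟨3, _⟩, _ => exact cop_3_9 h
    | ⟨4, _⟩, _ => exact cop_4_9 h
    | ⟨5, _⟩, _ => exact cop_5_9 h
    | ⟨6, _⟩, _ => exact cop_6_9 h
    | ⟨7, _⟩, _ => exact cop_7_9 h
    | ⟨8, _⟩, _ => exact cop_8_9 h
    | ⟨n + 9, _⟩, hkl => exact absurd hkl (by simp [Fin.lt_def])
  | ⟨10, _⟩, hkl =>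
    match k, hkl with
    | ⟨0, _⟩, _ => exact cop_0_10 h
    | ⟨1, _⟩, _ => exact cop_1_10 h
    | ⟨2, _⟩, _ => exact cop_2_10 h
    | ⟨3, _⟩, _ => exact cop_3_10 h
    | ⟨4, _⟩, _ => exact cop_4_10 h
    | ⟨5, _⟩, _ => exact cop_5_10 h
    | ⟨6, _⟩, _ => exact cop_6_10 h
    | ⟨7, _⟩, _ => exact cop_7_10 h
    | ⟨8, _⟩, _ => exact cop_8_10 h
    | ⟨9, _⟩, _ => exact cop_9_10 h
    | ⟨n + 10, _⟩, hkl => exact absurd hkl (by simp [Fin.lt_def])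
  | ⟨11, _⟩, hkl =>
    match k, hkl with
    | ⟨0, _⟩, _ => exact cop_0_11 h
    | ⟨1, _⟩, _ => exact cop_1_11 h
    | ⟨2, _⟩, _ => exact cop_2_11 h
    | ⟨3, _⟩, _ => exact cop_3_11 h
    | ⟨4, _⟩, _ => exact cop_4_11 h
    | ⟨5, _⟩, _ => exact cop_5_11 h
    | ⟨6, _⟩, _ => exact cop_6_11 h
    | ⟨7, _⟩, _ => exact cop_7_11 h
    | ⟨8, _⟩, _ => exact cop_8_11 h
    | ⟨9, _⟩, _ => exact cop_9_11 h
    | ⟨10, _⟩, _ => exact cop_10_11 h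
    | ⟨n + 11, _⟩, hkl => exact absurd hkl (by simp [Fin.lt_def])
  | ⟨12, _⟩, hkl =>
    match k, hkl with
    | ⟨0, _⟩, _ => exact cop_0_12 h
    | ⟨1, _⟩, _ => exact cop_1_12 h
    | ⟨2, _⟩, _ => exact cop_2_12 h
    | ⟨3, _⟩, _ => exact cop_3_12 h
    | ⟨4, _⟩, _ => exact cop_4_12 h
    | ⟨5, _⟩, _ => exact cop_5_12 h
    | ⟨6, _⟩, _ => exact cop_6_12 h
    | ⟨7, _⟩, _ => exact cop_7_12 h
    | ⟨8, _⟩, _ => exact cop_8_12 h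
    | ⟨9, _⟩, _ => exact cop_9_12 h
    | ⟨10, _⟩, _ => exact cop_10_12 h
    | ⟨11, _⟩, _ => exact cop_11_12 h
    | ⟨n + 12, _⟩, hkl => exact absurd hkl (by simp [Fin.lt_def])
  | ⟨13, _⟩, hkl =>
    match k, hkl with
    | ⟨0, _⟩, _ => exact cop_0_13 h
    | ⟨1, _⟩, _ => exact cop_1_13 h
    | ⟨2, _⟩, _ => exact cop_2_13 h
    | ⟨3, _⟩, _ => exact cop_3_13 h
    | ⟨4, _⟩, _ => exact cop_4_13 h
    | ⟨5, _⟩, _ => exact cop_5_13 h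
    | ⟨6, _⟩, _ => exact cop_6_13 h
    | ⟨7, _⟩, _ => exact cop_7_13 h
    | ⟨8, _⟩, _ => exact cop_8_13 h
    | ⟨9, _⟩, _ => exact cop_9_13 h
    | ⟨10, _⟩, _ => exact cop_10_13 h
    | ⟨11, _⟩, _ => exact cop_11_13 h
    | ⟨12, _⟩, _ => exact cop_12_13 h
    | ⟨n + 13, _⟩, hkl => exact absurd hkl (by simp [Fin.lt_def])
  | ⟨14, _⟩, hkl =>
    match k, hkl with
    | ⟨0, _⟩, _ => exact cop_0_14 h
    | ⟨1, _⟩, _ => exact cop_1_14 h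
    | ⟨2, _⟩, _ => exact cop_2_14 h
    | ⟨3, _⟩, _ => exact cop_3_14 h
    | ⟨4, _⟩, _ => exact cop_4_14 h
    | ⟨5, _⟩, _ => exact cop_5_14 h
    | ⟨6, _⟩, _ => exact cop_6_14 h
    | ⟨7, _⟩, _ => exact cop_7_14 h
    | ⟨8, _⟩, _ => exact cop_8_14 h
    | ⟨9, _⟩, _ => exact cop_9_14 h
    | ⟨10, _⟩, _ => exact cop_10_14 h
    | ⟨11, _⟩, _ => exact cop_11_14 h
    | ⟨12, _⟩, _ => exact cop_12_14 h
    | ⟨13, _⟩, _ => exact cop_13_14 h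
    | ⟨n + 14, _⟩, hkl => exact absurd hkl (by simp [Fin.lt_def])
  | ⟨15, _⟩, _ => exact cop 0 1 (h.2 0) (by rw [zero_mul, one_mul, zero_add]; rfl)
  | ⟨16, _⟩, _ =>
    have h1 : IsCoprime (pv k x y) (pv 16 x y) := cop 0 1 (h.2 1).neg (by rw [fv_1, pv_16]; ring)
    exact h1
  | ⟨n + 17, hn⟩, _ => exact absurd hn (by omega)

lemma cop_ne (h : GU y) (k l : Fin 17) (hkl : k ≠ l) : IsCoprime (pv k x y) (pv l x y) := by
  rcases lt_or_gt_of_ne hkl with h' | h'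
  · exact cop_lt h k l h'
  · exact (cop_lt h l k h').symm
end

lemma fv_map {R S : Type} [CommRing R] [CommRing S] (φ : R →+* S) (i : Fin 29) (y : R) :
    fv i (φ y) = φ (fv i y) := by
  have h2 : φ 2 = 2 := map_ofNat φ 2
  have h3 : φ 3 = 3 := map_ofNat φ 3
  have h4 : φ 4 = 4 := map_ofNat φ 4
  fin_cases i <;> simp [fv, h2, h3, h4]

lemma pv_map {R S : Type} [CommRing R] [CommRing S] (φ : R →+* S) (k : Fin 17) (x y : R) :
    pv k (φ x) (φ y) = φ (pv k x y) := by
  have h2 : φ 2 = 2 := map_ofNat φ 2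
  fin_cases k <;> simp [pv, h2]

section
variable {F : Type} [Field F]

lemma GU_C {y : F} (h2 : (2 : F) ≠ 0) (hy : ∀ i, fv i y ≠ 0) : GU (C y : F[X]) := by
  refine ⟨?_, fun i => ?_⟩
  · have : (2 : F[X]) = C 2 := rfl
    rw [this]
    exact isUnit_C.2 (isUnit_iff_ne_zero.2 h2)
  · rw [fv_map C]
    exact isUnit_C.2 (isUnit_iff_ne_zero.2 (hy i))

lemma sqf_of {p p' : F[X]} (h : derivative p = p') (hc : IsCoprime p p') : Squarefree p :=
  Polynomial.Separable.squarefree (by rw [separable_def, h]; exact hc)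

lemma pv_sqfree {y : F} (h : GU (C y : F[X])) (k : Fin 17) : Squarefree (pv k X (C y)) := by
  have lin : ∀ p p' : F[X], derivative p = p' → IsUnit p' → Squarefree p := fun p p' e hu =>
    sqf_of e (cop 0 1 hu (by ring))
  have h1 := h.2 1
  have h2 := h.2 2
  have h4 := h.2 4
  have h0 := h.2 0
  simp only [fv_0, fv_1, fv_2, fv_4] at h0 h1 h2 h4
  have d2 : derivative (2 : F[X]) = 0 := by
    have : (2 : F[X]) = C 2 := rfl
    rw [this, derivative_C]
  have dy : derivative ((C y : F[X]) ^ 2) = 0 := by rw [← C_pow, derivative_C]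
  have e2 : (1 : F[X]) + 1 = 2 := by norm_num
  match k with
  | ⟨0, _⟩ => exact lin X 1 (by simp) isUnit_one
  | ⟨1, _⟩ => exact lin (-X + 1) (-1) (by simp) isUnit_one.neg
  | ⟨2, _⟩ => exact lin (X - C y) 1 (by simp) isUnit_one
  | ⟨3, _⟩ => exact lin (X * C y - X + C y) (C y - 1) (by simp) h1
  | ⟨4, _⟩ => exact lin (X * C y + X - C y) (C y + 1) (by simp) h2
  | ⟨5, _⟩ => exact lin (X - C y + 1) 1 (by simp) isUnit_one
  | ⟨6, _⟩ => exact lin (X - C y - 1) 1 (by simp) isUnit_one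
  | ⟨7, _⟩ => exact lin (X + (C y) ^ 2 - 2 * C y) 1 (by simp [d2, dy]) isUnit_one
  | ⟨8, _⟩ => exact lin (2 * X * C y - X - (C y) ^ 2) (2 * C y - 1) (by simp [d2, dy]) h4
  | ⟨9, _⟩ => exact sqf_of (by simp [pv, d2, dy, e2]) (cod_9 h)
  | ⟨10, _⟩ => exact sqf_of (by simp [pv, d2, dy, e2]) (cod_10 h)
  | ⟨11, _⟩ => exact sqf_of (by simp [pv, d2, dy, e2] <;> ring) (cod_11 h)
  | ⟨12, _⟩ => exact sqf_of (by simp [pv, d2, dy, e2] <;> ring) (cod_12 h)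
  | ⟨13, _⟩ => exact sqf_of (by simp [pv, d2, dy, e2]) (cod_13 h)
  | ⟨14, _⟩ => exact sqf_of (by simp [pv, d2, dy, e2]) (cod_14 h)
  | ⟨15, _⟩ => exact h0.squarefree
  | ⟨16, _⟩ =>
    have e : (1 - C y : F[X]) = - (C y - 1) := by ring
    exact (e ▸ h1.neg : IsUnit (1 - C y : F[X])).squarefree
  | ⟨n + 17, hn⟩ => exact absurd hn (by omega)

lemma pv_natDegree_le (y : F) (k : Fin 17) : (pv k X (C y)).natDegree ≤ 2 := by
  fin_cases k <;> simp [pv] <;> compute_degree <;> norm_num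

lemma pv_natDegree_pos {y : F} (hy : ∀ i, fv i y ≠ 0) (k : Fin 17) (hk : k.val < 15) :
    0 < (pv k X (C y)).natDegree := by
  have pos1 : ∀ p : F[X], p.coeff 1 ≠ 0 → 0 < p.natDegree := fun p hp =>
    lt_of_lt_of_le one_pos (le_natDegree_of_ne_zero hp)
  have pos2 : ∀ p : F[X], p.coeff 2 ≠ 0 → 0 < p.natDegree := fun p hp =>
    lt_of_lt_of_le two_pos (le_natDegree_of_ne_zero hp)
  have h1 := hy 1
  have h2 := hy 2
  have h4 := hy 4
  simp only [fv_1, fv_2, fv_4] at h1 h2 h4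
  have c2 : (2 : F[X]) = C 2 := rfl
  have cy1 : ((C y : F[X]) ^ 2).coeff 1 = 0 := by rw [← C_pow, coeff_C]; simp
  have cy2 : ((C y : F[X]) ^ 2).coeff 2 = 0 := by rw [← C_pow, coeff_C]; simp
  match k, hk with
  | ⟨0, _⟩, _ => exact pos1 X (by simp)
  | ⟨1, _⟩, _ => exact pos1 (-X + 1) (by simp [coeff_one])
  | ⟨2, _⟩, _ => exact pos1 (X - C y) (by simp [cy1, cy2, coeff_C])
  | ⟨3, _⟩, _ => exact pos1 (X * C y - X + C y) (by simpa [cy1, cy2, coeff_C] using h1)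
  | ⟨4, _⟩, _ => exact pos1 (X * C y + X - C y) (by simpa [cy1, cy2, coeff_C] using h2)
  | ⟨5, _⟩, _ => exact pos1 (X - C y + 1) (by simp [cy1, cy2, coeff_C, coeff_one])
  | ⟨6, _⟩, _ => exact pos1 (X - C y - 1) (by simp [cy1, cy2, coeff_C, coeff_one])
  | ⟨7, _⟩, _ => exact pos1 (X + (C y) ^ 2 - 2 * C y) (by
      rw [c2]; simp [cy1, cy2, coeff_C])
  | ⟨8, _⟩, _ => exact pos1 (2 * X * C y - X - (C y) ^ 2) (by
      rw [c2]; simpa [cy1, cy2, coeff_C] using h4)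
  | ⟨9, _⟩, _ => exact pos2 (X ^ 2 - 2 * X * C y + C y) (by
      rw [c2]; simp [cy1, cy2, coeff_C, coeff_X])
  | ⟨10, _⟩, _ => exact pos2 (X ^ 2 - 2 * X + C y) (by
      rw [c2]; simp [cy1, cy2, coeff_C, coeff_X])
  | ⟨11, _⟩, _ => exact pos2 (X ^ 2 * C y - X ^ 2 + X * C y - (C y) ^ 2) (by
      simpa [cy1, cy2, coeff_C, coeff_X] using h1)
  | ⟨12, _⟩, _ => exact pos2 (X ^ 2 - X * (C y) ^ 2 - X * C y + (C y) ^ 2) (by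
      simp [cy1, cy2, coeff_C, coeff_X])
  | ⟨13, _⟩, _ => exact pos2 (X ^ 2 - X * C y + (C y) ^ 2 - C y) (by
      simp [cy1, cy2, coeff_C, coeff_X])
  | ⟨14, _⟩, _ => exact pos2 (X ^ 2 - X * C y - X + (C y) ^ 2) (by
      simp [cy1, cy2, coeff_C, coeff_X])
  | ⟨n + 15, _⟩, hk => exact absurd hk (by simp)

lemma fv_ne_zero (h2 : (2 : F) ≠ 0) (i : Fin 29) : fv i (X : F[X]) ≠ 0 := by
  have h4 : (4 : F) ≠ 0 := by
    have : (4 : F) = 2 * 2 := by norm_num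
    rw [this]; exact mul_ne_zero h2 h2
  have n0 : ∀ p : F[X], p.eval 0 ≠ 0 → p ≠ 0 := fun p hp h => hp (by rw [h, eval_zero])
  have n1 : ∀ p : F[X], ∀ k, p.coeff k ≠ 0 → p ≠ 0 := fun p k hp h => hp (by rw [h, coeff_zero])
  have c2 : (2 : F[X]) = C 2 := rfl
  have c3 : (3 : F[X]) = C 3 := rfl
  have c4 : (4 : F[X]) = C 4 := rfl
  match i with
  | ⟨0, _⟩ => exact n1 _ 1 (by simp [fv, c2, c3, c4, coeff_C, coeff_X, h2, h4])
  | ⟨1, _⟩ => exact n0 _ (by simp [fv, h2, h4])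
  | ⟨2, _⟩ => exact n0 _ (by simp [fv, h2, h4])
  | ⟨3, _⟩ => exact n1 _ 1 (by simp [fv, c2, c3, c4, coeff_C, coeff_X, h2, h4])
  | ⟨4, _⟩ => exact n0 _ (by simp [fv, h2, h4])
  | ⟨5, _⟩ => exact n0 _ (by simp [fv, h2, h4])
  | ⟨6, _⟩ => exact n0 _ (by simp [fv, h2, h4])
  | ⟨7, _⟩ => exact n0 _ (by simp [fv, h2, h4])
  | ⟨8, _⟩ => exact n0 _ (by simp [fv, h2, h4])
  | ⟨9, _⟩ => exact n0 _ (by simp [fv, h2, h4])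
  | ⟨10, _⟩ => exact n0 _ (by simp [fv, h2, h4])
  | ⟨11, _⟩ => exact n1 _ 2 (by simp [fv, c2, c3, c4, coeff_C, coeff_X, h2, h4])
  | ⟨12, _⟩ => exact n0 _ (by simp [fv, h2, h4])
  | ⟨13, _⟩ => exact n0 _ (by simp [fv, h2, h4])
  | ⟨14, _⟩ => exact n0 _ (by simp [fv, h2, h4])
  | ⟨15, _⟩ => exact n1 _ 1 (by simp [fv, c2, c3, c4, coeff_C, coeff_X, h2, h4])
  | ⟨16, _⟩ => exact n1 _ 1 (by simp [fv, c2, c3, c4, coeff_C, coeff_X, h2, h4])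
  | ⟨17, _⟩ => exact n0 _ (by simp [fv, h2, h4])
  | ⟨18, _⟩ => exact n0 _ (by simp [fv, h2, h4])
  | ⟨19, _⟩ => exact n0 _ (by simp [fv, h2, h4])
  | ⟨20, _⟩ => exact n1 _ 1 (by simp [fv, c2, c3, c4, coeff_C, coeff_X, h2, h4])
  | ⟨21, _⟩ => exact n1 _ 1 (by simp [fv, c2, c3, c4, coeff_C, coeff_X, h2, h4])
  | ⟨22, _⟩ => exact n0 _ (by simp [fv, h2, h4])
  | ⟨23, _⟩ => exact n0 _ (by simp [fv, h2, h4])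
  | ⟨24, _⟩ => exact n0 _ (by simp [fv, h2, h4])
  | ⟨25, _⟩ => exact n0 _ (by simp [fv, h2, h4])
  | ⟨26, _⟩ => exact n1 _ 2 (by simp [fv, c2, c3, c4, coeff_C, coeff_X, h2, h4])
  | ⟨27, _⟩ => exact n0 _ (by simp [fv, h2, h4])
  | ⟨28, _⟩ => exact n0 _ (by simp [fv, h2, h4])
  | ⟨n + 29, hn⟩ => exact absurd hn (by omega)

lemma fv_natDegree_le (i : Fin 29) : (fv i (X : F[X])).natDegree ≤ 3 := by
  fin_cases i <;> simp [fv] <;> compute_degree <;> norm_num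

end
section CharSums
variable {F : Type} [Field F] [Fintype F]

/-- real-valued quadratic character -/
def chi (z : F) : ℝ := ((quadraticChar F z : ℤ) : ℝ)

lemma chi_mul (z w : F) : chi (z * w) = chi z * chi w := by
  unfold chi; rw [map_mul]; push_cast; rfl

lemma chi_prod {ι : Type} (s : Finset ι) (f : ι → F) : chi (∏ i ∈ s, f i) = ∏ i ∈ s, chi (f i) := by
  unfold chi; rw [map_prod]; push_cast; rfl

lemma chi_abs_le (z : F) : |chi z| ≤ 1 := by
  unfold chi
  by_cases h : z = 0
  · subst h; simp
  · rcases quadraticChar_dichotomy h with h | h <;> rw [h] <;> simp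

lemma chi_prod_abs_le {ι : Type} (s : Finset ι) (f : ι → F) : |∏ i ∈ s, chi (f i)| ≤ 1 := by
  rw [← chi_prod]; exact chi_abs_le _

lemma two_ne_of_odd (h : Fintype.card F % 2 = 1) : (2 : F) ≠ 0 := by
  apply Ring.two_ne_zero
  intro h2
  have := FiniteField.even_card_iff_char_two.1 h2
  omega

lemma poly_zero_card {p : F[X]} (hp : p ≠ 0) (d : ℕ) (hd : p.natDegree ≤ d) :
    (Finset.univ.filter fun x : F => p.eval x = 0).card ≤ d := by
  calc _ ≤ p.roots.toFinset.card := by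
        apply Finset.card_le_card
        intro x hx
        simp only [Finset.mem_filter, Finset.mem_univ, true_and] at hx
        simp [hp, hx]
    _ ≤ Multiset.card p.roots := Multiset.toFinset_card_le _
    _ ≤ p.natDegree := p.card_roots'
    _ ≤ d := hd

/-- exceptional ordinates -/
def badY (F : Type) [Field F] [Fintype F] : Finset F :=
  Finset.univ.filter fun y : F => ∃ i, fv i y = 0

lemma bad_card (h2 : (2 : F) ≠ 0) : (badY F).card ≤ 87 := by
  have h : badY F ⊆ Finset.univ.biUnion
      fun i : Fin 29 => Finset.univ.filter fun y : F => (fv i (X : F[X])).eval y = 0 := by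
    intro y hy
    simp only [badY, Finset.mem_filter, Finset.mem_univ, true_and] at hy
    obtain ⟨i, hi⟩ := hy
    simp only [Finset.mem_biUnion, Finset.mem_filter, Finset.mem_univ, true_and]
    refine ⟨i, ?_⟩
    have := fv_map (evalRingHom y) i X
    simp only [coe_evalRingHom, eval_X] at this
    rw [← this, hi]
  calc _ ≤ _ := Finset.card_le_card h
    _ ≤ _ := Finset.card_biUnion_le
    _ ≤ ∑ _i : Fin 29, 3 := Finset.sum_le_sum fun i _ =>
        poly_zero_card (fv_ne_zero h2 i) 3 (fv_natDegree_le i)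
    _ = 87 := by simp

lemma pv_eval (k : Fin 17) (x y : F) : (pv k X (C y)).eval x = pv k x y := by
  have := pv_map (evalRingHom x) k X (C y)
  simp only [coe_evalRingHom, eval_X, eval_C] at this
  exact this.symm

/-- points where some polynomial vanishes -/
def nongen (F : Type) [Field F] [Fintype F] : Finset (F × F) :=
  Finset.univ.filter fun p : F × F => ∃ k, pv k p.1 p.2 = 0

lemma nongen_card (h2 : (2 : F) ≠ 0) : (nongen F).card ≤ 200 * Fintype.card F := by
  have h : ∀ y : F, ((nongen F).filter fun p => p.2 = y).card ≤
      34 + if y ∈ badY F then Fintype.card F else 0 := by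
    intro y
    have e : ((nongen F).filter fun p => p.2 = y).card ≤
        (Finset.univ.filter fun x : F => ∃ k, pv k x y = 0).card := by
      apply Finset.card_le_card_of_injOn (fun p => p.1)
      · intro p hp
        simp only [nongen, Finset.coe_filter, Finset.mem_filter, Finset.mem_univ, true_and,
          Set.mem_ofPred_eq] at hp ⊢
        rw [← hp.2]; exact hp.1
      · intro p hp p' hp' e
        simp only [Finset.coe_filter, Set.mem_ofPred_eq] at hp hp'
        exact Prod.ext e (hp.2.trans hp'.2.symm)
    refine e.trans ?_
    split_ifs with hy
    · exact (Finset.card_le_univ _).trans (Nat.le_add_left _ _)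
    · have hy' : ∀ i, fv i y ≠ 0 := by
        intro i hi
        exact hy (by simp only [badY, Finset.mem_filter, Finset.mem_univ, true_and]; exact ⟨i, hi⟩)
      have hs : (Finset.univ.filter fun x : F => ∃ k, pv k x y = 0) ⊆ Finset.univ.biUnion
          fun k : Fin 17 => Finset.univ.filter fun x : F => (pv k X (C y)).eval x = 0 := by
        intro x hx
        simp only [Finset.mem_biUnion, Finset.mem_filter, Finset.mem_univ, true_and] at hx ⊢
        obtain ⟨k, hk⟩ := hx
        exact ⟨k, by rw [pv_eval, hk]⟩
      calc _ ≤ _ := Finset.card_le_card hs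
        _ ≤ _ := Finset.card_biUnion_le
        _ ≤ ∑ _i : Fin 17, 2 := Finset.sum_le_sum fun k _ =>
            poly_zero_card (pv_sqfree (GU_C h2 hy') k).ne_zero 2 (pv_natDegree_le y k)
        _ = 34 + 0 := by simp
  calc (nongen F).card = ∑ y : F, ((nongen F).filter fun p => p.2 = y).card :=
        Finset.card_eq_sum_card_fiberwise (fun _ _ => Finset.mem_coe.2 (Finset.mem_univ _))
    _ ≤ ∑ y : F, (34 + if y ∈ badY F then Fintype.card F else 0) :=
        Finset.sum_le_sum fun y _ => h y
    _ = 34 * Fintype.card F + (badY F).card * Fintype.card F := by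
        rw [Finset.sum_add_distrib, ← Finset.sum_filter]
        simp [mul_comm]
    _ ≤ 34 * Fintype.card F + 87 * Fintype.card F := by
        gcongr; exact bad_card h2
    _ ≤ _ := by omega

lemma good_poly {y : F} (h2 : (2 : F) ≠ 0) (hy : ∀ i, fv i y ≠ 0) (S : Finset (Fin 17))
    (hS : ∃ k ∈ S, k.val < 15) :
    Squarefree (∏ k ∈ S, pv k X (C y)) ∧ 0 < (∏ k ∈ S, pv k X (C y)).natDegree ∧
      (∏ k ∈ S, pv k X (C y)).natDegree ≤ 34 := by
  have g := GU_C h2 hy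
  have ne : ∀ k, pv k X (C y) ≠ 0 := fun k => (pv_sqfree g k).ne_zero
  refine ⟨?_, ?_, ?_⟩
  · apply Finset.squarefree_prod_of_pairwise_isCoprime
    · intro k _ l _ hkl
      exact (cop_ne g k l hkl).isRelPrime
    · exact fun k _ => pv_sqfree g k
  · obtain ⟨k, hk, hk'⟩ := hS
    rw [natDegree_prod _ _ fun k _ => ne k]
    exact Finset.sum_pos' (fun _ _ => Nat.zero_le _) ⟨k, hk, pv_natDegree_pos hy k hk'⟩
  · rw [natDegree_prod _ _ fun k _ => ne k]
    calc _ ≤ ∑ _k ∈ S, 2 := Finset.sum_le_sum fun k _ => pv_natDegree_le y k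
      _ = S.card * 2 := by simp
      _ ≤ 17 * 2 := by gcongr; simpa using Finset.card_le_univ S
      _ = 34 := rfl

lemma y_poly (S : Finset (Fin 17)) (hn : S.Nonempty) (hS : ∀ k ∈ S, ¬ k.val < 15) :
    ∃ f : F[X], Squarefree f ∧ 0 < f.natDegree ∧ f.natDegree ≤ 34 ∧
      ∀ x y : F, ∏ k ∈ S, pv k x y = f.eval y := by
  have c : ∀ k ∈ S, k = 15 ∨ k = 16 := by
    intro k hk
    have := hS k hk
    have := k.isLt
    have h : k.val = 15 ∨ k.val = 16 := by omega
    rcases h with h | h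
    · left; exact Fin.ext h
    · right; exact Fin.ext h
  have dX : (X : F[X]).natDegree = 1 := natDegree_X
  have d1 : (1 - X : F[X]).natDegree = 1 := by
    have : (1 - X : F[X]) = - (X - C 1) := by simp
    rw [this, natDegree_neg, natDegree_X_sub_C]
  have s0 : Squarefree (X : F[X]) := irreducible_X.squarefree
  have s1 : Squarefree (1 - X : F[X]) := by
    have h : (1 - X : F[X]).degree = ((1 : ℕ) : WithBot ℕ) := by
      rw [degree_eq_iff_natDegree_eq_of_pos one_pos, d1]
    exact (irreducible_of_degree_eq_one h).squarefree
  by_cases h15 : (15 : Fin 17) ∈ S <;> by_cases h16 : (16 : Fin 17) ∈ S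
  · have : S = {15, 16} := by
      ext k; simp only [Finset.mem_insert, Finset.mem_singleton]
      exact ⟨c k, by rintro (rfl | rfl) <;> assumption⟩
    refine ⟨X * (1 - X), ?_, ?_, ?_, ?_⟩
    · have hc : IsCoprime (X : F[X]) (1 - X) := ⟨1, 1, by ring⟩
      exact (squarefree_mul_iff).2 ⟨hc.isRelPrime, s0, s1⟩
    · rw [natDegree_mul s0.ne_zero s1.ne_zero, dX, d1]; norm_num
    · rw [natDegree_mul s0.ne_zero s1.ne_zero, dX, d1]; norm_num
    · intro x y
      rw [this, Finset.prod_insert (by decide), Finset.prod_singleton]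
      simp [pv_15, pv_16]
  · have : S = {15} := by
      ext k; simp only [Finset.mem_singleton]
      refine ⟨fun hk => (c k hk).resolve_right ?_, by rintro rfl; assumption⟩
      rintro rfl; exact h16 hk
    refine ⟨X, s0, by rw [dX]; norm_num, by rw [dX]; norm_num, ?_⟩
    intro x y
    rw [this, Finset.prod_singleton]
    simp [pv_15]
  · have : S = {16} := by
      ext k; simp only [Finset.mem_singleton]
      refine ⟨fun hk => (c k hk).resolve_left ?_, by rintro rfl; assumption⟩
      rintro rfl; exact h15 hk
    refine ⟨1 - X, s1, by rw [d1]; norm_num, by rw [d1]; norm_num, ?_⟩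
    intro x y
    rw [this, Finset.prod_singleton]
    simp [pv_16]
  · exfalso
    obtain ⟨k, hk⟩ := hn
    rcases c k hk with rfl | rfl
    · exact h15 hk
    · exact h16 hk

end CharSums

theorem char_sum_small (ε : ℝ) (hε : 0 < ε) : ∃ N : ℕ, ∀ (F : Type) [Field F] [Fintype F],
    N < Fintype.card F → Fintype.card F % 2 = 1 → ∀ S : Finset (Fin 17), S.Nonempty →
    |∑ p : F × F, ∏ k ∈ S, chi (pv k p.1 p.2)| ≤ ε * (Fintype.card F : ℝ) ^ 2 := by
  obtain ⟨N, hN⟩ := weak_weil 34 (ε / 2) (by positivity)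
  obtain ⟨M, hM⟩ := exists_nat_gt (87 / (ε / 2))
  refine ⟨max N M, fun F _ _ hF hodd S hSn => ?_⟩
  have h2 : (2 : F) ≠ 0 := two_ne_of_odd hodd
  have hNF : N < Fintype.card F := lt_of_le_of_lt (le_max_left _ _) hF
  have hMF : M < Fintype.card F := lt_of_le_of_lt (le_max_right _ _) hF
  set q : ℝ := (Fintype.card F : ℝ) with hq
  have hq0 : 0 ≤ q := by positivity
  have hMq : 87 ≤ ε / 2 * q := by
    have : (M : ℝ) < q := by rw [hq]; exact_mod_cast hMF
    have h := hM.trans this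
    rw [div_lt_iff₀ (by positivity)] at h
    linarith
  have W := fun f a b c => hN F hNF hodd f a b c
  rw [Fintype.sum_prod_type_right]
  by_cases hS : ∃ k ∈ S, k.val < 15
  · have hb : ∀ y : F, |∑ x : F, ∏ k ∈ S, chi (pv k x y)| ≤
        ε / 2 * q + if y ∈ badY F then q else 0 := by
      intro y
      split_ifs with hy
      · calc _ ≤ ∑ x : F, |∏ k ∈ S, chi (pv k x y)| := Finset.abs_sum_le_sum_abs _ _
          _ ≤ ∑ _x : F, (1 : ℝ) := Finset.sum_le_sum fun x _ => chi_prod_abs_le _ _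
          _ = q := by simp [hq]
          _ ≤ _ := by have : 0 ≤ ε / 2 * q := by positivity
                      linarith
      · have hy' : ∀ i, fv i y ≠ 0 := by
          intro i hi
          exact hy (by simp only [badY, Finset.mem_filter, Finset.mem_univ, true_and]; exact ⟨i, hi⟩)
        obtain ⟨a, b, c⟩ := good_poly h2 hy' S hS
        have := W _ a b c
        rw [add_zero]
        refine le_trans (le_of_eq ?_) this
        congr 1
        refine Finset.sum_congr rfl fun x _ => ?_
        rw [← chi_prod, chi, eval_prod]
        simp only [pv_eval]
    calc _ ≤ ∑ y : F, |∑ x : F, ∏ k ∈ S, chi (pv k x y)| := Finset.abs_sum_le_sum_abs _ _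
      _ ≤ ∑ y : F, (ε / 2 * q + if y ∈ badY F then q else 0) := Finset.sum_le_sum fun y _ => hb y
      _ = ε / 2 * q * q + (badY F).card * q := by
          rw [Finset.sum_add_distrib, ← Finset.sum_filter]
          simp [hq]; ring
      _ ≤ ε / 2 * q * q + 87 * q := by
          have : ((badY F).card : ℝ) ≤ 87 := by exact_mod_cast bad_card h2
          gcongr
      _ ≤ ε / 2 * q * q + (ε / 2 * q) * q := by gcongr
      _ = _ := by ring
  · obtain ⟨f, a, b, c, d⟩ := y_poly (F := F) S hSn (by
      intro k hk h; exact hS ⟨k, hk, h⟩)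
    have := W f a b c
    have e : ∑ y : F, ∑ x : F, ∏ k ∈ S, chi (pv k x y) =
        q * ∑ y : F, ((quadraticChar F (f.eval y) : ℤ) : ℝ) := by
      rw [Finset.mul_sum]
      refine Finset.sum_congr rfl fun y _ => ?_
      have : ∀ x : F, ∏ k ∈ S, chi (pv k x y) = ((quadraticChar F (f.eval y) : ℤ) : ℝ) := by
        intro x; rw [← chi_prod, d]; rfl
      simp only [this]
      simp [hq]
    rw [e, abs_mul, abs_of_nonneg hq0]
    calc _ ≤ q * (ε / 2 * q) := by gcongr
      _ ≤ _ := by nlinarith [mul_nonneg hε.le (mul_nonneg hq0 hq0)]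
section Equi

/-- sign of a boolean -/
def bsg (v : Bool) : ℝ := if v then 1 else -1

/-- vector of quadratic residuosity of the seventeen polynomials -/
def sgn {F : Type} [Field F] (p : F × F) : Fin 17 → Bool := fun k => decide (IsSquare (pv k p.1 p.2))

lemma chi_eq {F : Type} [Field F] [Fintype F] {z : F} (hz : z ≠ 0) :
    chi z = bsg (decide (IsSquare z)) := by
  unfold chi bsg
  by_cases h : IsSquare z
  · rw [(quadraticChar_one_iff_isSquare hz).2 h]; simp [h]
  · rcases quadraticChar_dichotomy hz with h' | h'
    · exact absurd ((quadraticChar_one_iff_isSquare hz).1 h') h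
    · rw [h']; simp [h]

lemma bsg_mul (u v : Bool) : 1 + bsg u * bsg v = if v = u then 2 else 0 := by
  cases u <;> cases v <;> norm_num [bsg]

lemma bsg_abs (u : Bool) : |bsg u| = 1 := by cases u <;> simp [bsg]

lemma wt_generic {F : Type} [Field F] [Fintype F] (v : Fin 17 → Bool) (p : F × F)
    (hp : p ∉ nongen F) :
    ∏ k, (1 + bsg (v k) * chi (pv k p.1 p.2)) = if sgn p = v then 2 ^ 17 else 0 := by
  have h : ∀ k, pv k p.1 p.2 ≠ 0 := by
    intro k hk
    exact hp (by simp only [nongen, Finset.mem_filter, Finset.mem_univ, true_and]; exact ⟨k, hk⟩)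
  have : ∀ k, 1 + bsg (v k) * chi (pv k p.1 p.2) = if sgn p k = v k then 2 else 0 := by
    intro k
    have hs : sgn p k = decide (IsSquare (pv k p.1 p.2)) := by unfold sgn; congr
    rw [chi_eq (h k), bsg_mul, hs]
  simp only [this]
  split_ifs with e
  · rw [e]; simp
  · obtain ⟨k, hk⟩ := Function.ne_iff.1 e
    exact Finset.prod_eq_zero (Finset.mem_univ k) (by simp [hk])

lemma wt_bound {F : Type} [Field F] [Fintype F] (v : Fin 17 → Bool) (p : F × F) :
    0 ≤ ∏ k, (1 + bsg (v k) * chi (pv k p.1 p.2)) ∧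
    ∏ k, (1 + bsg (v k) * chi (pv k p.1 p.2)) ≤ 2 ^ 17 := by
  have h : ∀ k, |bsg (v k) * chi (pv k p.1 p.2)| ≤ 1 := by
    intro k; rw [abs_mul, bsg_abs, one_mul]; exact chi_abs_le _
  have h0 : ∀ k, 0 ≤ 1 + bsg (v k) * chi (pv k p.1 p.2) := by
    intro k; have := (abs_le.1 (h k)).1; linarith
  have h2 : ∀ k, 1 + bsg (v k) * chi (pv k p.1 p.2) ≤ 2 := by
    intro k; have := (abs_le.1 (h k)).2; linarith
  refine ⟨Finset.prod_nonneg fun k _ => h0 k, ?_⟩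
  calc _ ≤ ∏ _k : Fin 17, (2 : ℝ) := Finset.prod_le_prod (fun k _ => h0 k) fun k _ => h2 k
    _ = 2 ^ 17 := by simp

/-- generic points with prescribed signs -/
def cell (F : Type) [Field F] [Fintype F] (v : Fin 17 → Bool) : Finset (F × F) :=
  Finset.univ.filter fun p : F × F => p ∉ nongen F ∧ sgn p = v

lemma cell_sum {F : Type} [Field F] [Fintype F] (v : Fin 17 → Bool) :
    |2 ^ 17 * ((cell F v).card : ℝ) - ∑ p : F × F, ∏ k, (1 + bsg (v k) * chi (pv k p.1 p.2))|
      ≤ 2 ^ 17 * ((nongen F).card : ℝ) := by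
  have e : (2 ^ 17 * ((cell F v).card : ℝ)) =
      ∑ p : F × F, if p ∉ nongen F ∧ sgn p = v then (2 ^ 17 : ℝ) else 0 := by
    rw [← Finset.sum_filter, Finset.sum_const, nsmul_eq_mul, mul_comm]; rfl
  rw [e, ← Finset.sum_sub_distrib]
  refine (Finset.abs_sum_le_sum_abs _ _).trans ?_
  have e2 : (2 ^ 17 * ((nongen F).card : ℝ)) =
      ∑ p : F × F, if p ∈ nongen F then (2 ^ 17 : ℝ) else 0 := by
    rw [← Finset.sum_filter, Finset.sum_const, nsmul_eq_mul, mul_comm]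
    congr 2
    simp
  rw [e2]
  refine Finset.sum_le_sum fun p _ => ?_
  by_cases hp : p ∈ nongen F
  · have := wt_bound v p
    rw [if_neg (by simp [hp]), if_pos hp, zero_sub, abs_neg, abs_of_nonneg this.1]
    exact this.2
  · rw [wt_generic v p hp, if_neg hp]
    simp [hp]

theorem cell_card (ε : ℝ) (hε : 0 < ε) : ∃ N : ℕ, ∀ (F : Type) [Field F] [Fintype F],
    N < Fintype.card F → Fintype.card F % 2 = 1 → ∀ v : Fin 17 → Bool,
    |((cell F v).card : ℝ) - (Fintype.card F : ℝ) ^ 2 / 2 ^ 17| ≤ ε * (Fintype.card F : ℝ) ^ 2 := by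
  obtain ⟨N, hN⟩ := char_sum_small (ε / 2) (by positivity)
  obtain ⟨M, hM⟩ := exists_nat_gt (200 / (ε / 2))
  refine ⟨max N M, fun F _ _ hF hodd v => ?_⟩
  have h2 : (2 : F) ≠ 0 := two_ne_of_odd hodd
  have hNF : N < Fintype.card F := lt_of_le_of_lt (le_max_left _ _) hF
  have hMF : M < Fintype.card F := lt_of_le_of_lt (le_max_right _ _) hF
  have W := hN F hNF hodd
  set q : ℝ := (Fintype.card F : ℝ) with hq
  have hq0 : 0 ≤ q := by positivity
  have hMq : 200 ≤ ε / 2 * q := by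
    have : (M : ℝ) < q := by rw [hq]; exact_mod_cast hMF
    have h := hM.trans this
    rw [div_lt_iff₀ (by positivity)] at h
    linarith
  have hng : ((nongen F).card : ℝ) ≤ 200 * q := by
    rw [hq]; exact_mod_cast nongen_card h2
  have h1 := cell_sum (F := F) v
  have h3 : |∑ p : F × F, ∏ k, (1 + bsg (v k) * chi (pv k p.1 p.2)) - q ^ 2| ≤
      2 ^ 17 * (ε / 2 * q ^ 2) := by
    have e : ∑ p : F × F, ∏ k, (1 + bsg (v k) * chi (pv k p.1 p.2)) =
        ∑ S : Finset (Fin 17), (∏ k ∈ S, bsg (v k)) *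
          ∑ p : F × F, ∏ k ∈ S, chi (pv k p.1 p.2) := by
      simp only [Finset.prod_one_add, Finset.powerset_univ]
      rw [Finset.sum_comm]
      simp only [Finset.prod_mul_distrib, Finset.mul_sum]
    have e0 : (∏ k ∈ (∅ : Finset (Fin 17)), bsg (v k)) *
          ∑ p : F × F, ∏ k ∈ (∅ : Finset (Fin 17)), chi (pv k p.1 p.2) = q ^ 2 := by
      simp only [Finset.prod_empty, Finset.sum_const, one_mul, Finset.card_univ, Fintype.card_prod,
        nsmul_eq_mul, mul_one, hq]
      push_cast; ring
    rw [e, ← Finset.add_sum_erase _ _ (Finset.mem_univ ∅), e0, add_sub_cancel_left]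
    calc _ ≤ ∑ S ∈ Finset.univ.erase (∅ : Finset (Fin 17)), |(∏ k ∈ S, bsg (v k)) *
          ∑ p : F × F, ∏ k ∈ S, chi (pv k p.1 p.2)| := Finset.abs_sum_le_sum_abs _ _
      _ ≤ ∑ S ∈ Finset.univ.erase (∅ : Finset (Fin 17)), (ε / 2 * q ^ 2) := by
          refine Finset.sum_le_sum fun S hS => ?_
          rw [abs_mul, Finset.abs_prod]
          simp only [bsg_abs, Finset.prod_const_one, one_mul]
          exact W S (Finset.nonempty_iff_ne_empty.2 (Finset.ne_of_mem_erase hS))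
      _ ≤ ∑ S : Finset (Fin 17), (ε / 2 * q ^ 2) :=
          Finset.sum_le_sum_of_subset_of_nonneg (Finset.erase_subset _ _)
            fun _ _ _ => by positivity
      _ = 2 ^ 17 * (ε / 2 * q ^ 2) := by
          rw [Finset.sum_const, Finset.card_univ, Fintype.card_finset, Fintype.card_fin,
            nsmul_eq_mul]
          norm_num
  have h4 : (2 ^ 17 : ℝ) * (nongen F).card ≤ 2 ^ 17 * (ε / 2 * q * q) := by
    refine mul_le_mul_of_nonneg_left (hng.trans ?_) (by positivity)
    exact mul_le_mul_of_nonneg_right hMq hq0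
  rw [abs_le] at h1 h3 ⊢
  constructor <;> nlinarith [h1.1, h1.2, h3.1, h3.2, h4]

theorem equi (Φ : Finset (Fin 17 → Bool)) (ε : ℝ) (hε : 0 < ε) :
    ∃ N : ℕ, ∀ (F : Type) [Field F] [Fintype F],
    N < Fintype.card F → Fintype.card F % 2 = 1 →
    |((Finset.univ.filter fun p : F × F => p ∉ nongen F ∧ sgn p ∈ Φ).card : ℝ)
      - Φ.card / 2 ^ 17 * (Fintype.card F : ℝ) ^ 2| ≤ ε * (Fintype.card F : ℝ) ^ 2 := by
  obtain ⟨N, hN⟩ := cell_card (ε / (Φ.card + 1)) (by positivity)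
  refine ⟨N, fun F _ _ hF hodd => ?_⟩
  have W := hN F hF hodd
  have e : (Finset.univ.filter fun p : F × F => p ∉ nongen F ∧ sgn p ∈ Φ).card =
      ∑ v ∈ Φ, (cell F v).card := by
    rw [Finset.card_eq_sum_card_fiberwise (f := sgn) (t := Φ)]
    · refine Finset.sum_congr rfl fun v hv => ?_
      congr 1
      ext p
      simp only [cell, Finset.mem_filter, Finset.mem_univ, true_and]
      constructor
      · rintro ⟨⟨a, _⟩, c⟩; exact ⟨a, c⟩
      · rintro ⟨a, c⟩; exact ⟨⟨a, c ▸ hv⟩, c⟩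
    · intro p hp
      simp only [Finset.coe_filter, Finset.mem_univ, true_and, Set.mem_ofPred_eq] at hp
      exact hp.2
  rw [e]
  push_cast
  have e2 : (Φ.card : ℝ) / 2 ^ 17 * (Fintype.card F : ℝ) ^ 2 =
      ∑ v ∈ Φ, (Fintype.card F : ℝ) ^ 2 / 2 ^ 17 := by
    rw [Finset.sum_const, nsmul_eq_mul]; ring
  rw [e2, ← Finset.sum_sub_distrib]
  calc _ ≤ ∑ v ∈ Φ, |((cell F v).card : ℝ) - (Fintype.card F : ℝ) ^ 2 / 2 ^ 17| :=
        Finset.abs_sum_le_sum_abs _ _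
    _ ≤ ∑ v ∈ Φ, (ε / (Φ.card + 1) * (Fintype.card F : ℝ) ^ 2) := Finset.sum_le_sum fun v _ => W v
    _ = (Φ.card / (Φ.card + 1)) * (ε * (Fintype.card F : ℝ) ^ 2) := by
        rw [Finset.sum_const, nsmul_eq_mul]; ring
    _ ≤ 1 * (ε * (Fintype.card F : ℝ) ^ 2) := by
        refine mul_le_mul_of_nonneg_right ?_ (by positivity)
        rw [div_le_one (by positivity)]; linarith
    _ = _ := one_mul _

end Equi
section Count

/-- residuosity table of the first coordinate -/
def t1 (v3 v5 j r s : Bool) : Bool :=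
  match j, r, s with
  | true, true, false => v3
  | false, false, true => v5
  | _, _, _ => true

/-- residuosity table of the second coordinate -/
def t2 (v4 v6 i r s : Bool) : Bool :=
  match i, r, s with
  | true, false, true => !v4
  | false, true, false => v6
  | _, _, _ => false

/-- residuosity table of the third coordinate -/
def t3 (v1 v7 v8 v11 v13 i j s : Bool) : Bool :=
  match i, j, s with
  | true, true, false => v11
  | true, false, true => v7
  | false, true, false => v8
  | false, false, true => v13
  | _, _, _ => !v1

/-- residuosity table of the fourth coordinate -/
def t4 (v9 v10 v12 v14 v16 i j r : Bool) : Bool :=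
  match i, j, r with
  | true, true, false => !v12
  | true, false, false => !v9
  | false, true, true => v10
  | false, false, true => v14
  | _, _, _ => !v16

/-- the pattern `(i,j,r,s)` is realised by a scalar of residuosity `t` -/
def hit (i j r s d n1 n2 n3 n4 t : Bool) : Bool :=
  (i == (t == (d == n1))) && ((j == (t == (d == n2))) && ((r == (t == n3)) && (s == (t == n4))))

/-- the pattern `(i,j,r,s)` is not realised -/
def avoid (i j r s d n1 n2 n3 n4 : Bool) : Bool :=
  !(hit i j r s d n1 n2 n3 n4 true) && !(hit i j r s d n1 n2 n3 n4 false)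

/-- none of the patterns `(i,j,_,_)` is realised -/
def okp (i j d : Bool) (n1 n2 : Bool → Bool → Bool) (n3 n4 : Bool → Bool) : Bool :=
  (avoid i j true true d (n1 true true) (n2 true true) (n3 true) (n4 true) &&
   avoid i j true false d (n1 true false) (n2 true false) (n3 false) (n4 true)) &&
  (avoid i j false true d (n1 false true) (n2 false true) (n3 true) (n4 false) &&
   avoid i j false false d (n1 false false) (n2 false false) (n3 false) (n4 false))

/-- as `okp`, with the tables filled in -/
def okt (i j v1 v2 v3 v4 v5 v6 v7 v8 v9 v10 v11 v12 v13 v14 v16 : Bool) : Bool :=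
  okp i j v2 (fun r s => t1 v3 v5 j r s) (fun r s => t2 v4 v6 i r s)
    (fun s => t3 v1 v7 v8 v11 v13 i j s) (fun r => t4 v9 v10 v12 v14 v16 i j r)

lemma okp_iff (i j d : Bool) (n1 n2 : Bool → Bool → Bool) (n3 n4 : Bool → Bool) :
    okp i j d n1 n2 n3 n4 = true ↔
      ∀ r s t, hit i j r s d (n1 r s) (n2 r s) (n3 s) (n4 r) t = false := by
  simp only [okp, avoid, Bool.and_eq_true, Bool.not_eq_true', Bool.forall_bool]
  tauto

/-- summation over a boolean -/
def bsum (f : Bool → ℕ) : ℕ := f true + f false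

lemma sum_bsum (f : Bool → ℕ) : ∑ b, f b = bsum f := Fintype.sum_bool f

lemma bsum_cond (c : Bool) (f : Bool → ℕ) :
    (bsum fun b => bif c then f b else 0) = bif c then bsum f else 0 := by
  cases c <;> rfl

/-- the sign vector yields a maximally nonassociative quasigroup -/
def good (v : Fin 17 → Bool) : ℕ :=
  bif v 15 then bif v 0 then
  bif okt true false (v 1) (v 2) (v 3) (v 4) (v 5) (v 6) (v 7) false (v 9) false
    false false false false (v 16) then
  bif okt false true (v 1) (v 2) (v 3) (v 4) (v 5) (v 6) false (v 8) false (v 10)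
    false false false false (v 16) then
  bif okt true true (v 1) (v 2) (v 3) (v 4) (v 5) (v 6) false false false false
    (v 11) (v 12) false false (v 16) then
  bif okt false false (v 1) (v 2) (v 3) (v 4) (v 5) (v 6) false false false false
    false false (v 13) (v 14) (v 16) then 1 else 0 else 0 else 0 else 0 else 0 else 0

/-- seventeen booleans, in the order convenient for counting -/
def vecEquiv : (Fin 17 → Bool) ≃ (Bool × Bool × Bool × Bool × Bool × Bool × Bool × Bool × Bool ×
    Bool × Bool × Bool × Bool × Bool × Bool × Bool × Bool) where
  toFun v := (v 16, v 15, v 0, v 1, v 2, v 3, v 4, v 5, v 6, v 7, v 8, v 9, v 10, v 11, v 12,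
    v 13, v 14)
  invFun := fun (b16, b15, b0, b1, b2, b3, b4, b5, b6, b7, b8, b9, b10, b11, b12, b13, b14) =>
    ![b0, b1, b2, b3, b4, b5, b6, b7, b8, b9, b10, b11, b12, b13, b14, b15, b16]
  left_inv v := by
    funext k
    fin_cases k <;> rfl
  right_inv p := rfl

lemma sum_good : ∑ v : Fin 17 → Bool, good v = 1650 := by
  rw [← Equiv.sum_comp vecEquiv.symm]
  have h : ∀ b16 b15 b0 b1 b2 b3 b4 b5 b6 b7 b8 b9 b10 b11 b12 b13 b14,
      good (vecEquiv.symm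
        (b16, b15, b0, b1, b2, b3, b4, b5, b6, b7, b8, b9, b10, b11, b12, b13, b14)) =
      bif b15 then bif b0 then
      bif okt true false b1 b2 b3 b4 b5 b6 b7 false b9 false false false false false b16 then
      bif okt false true b1 b2 b3 b4 b5 b6 false b8 false b10 false false false false b16 then
      bif okt true true b1 b2 b3 b4 b5 b6 false false false false b11 b12 false false b16 then
      bif okt false false b1 b2 b3 b4 b5 b6 false false false false false false b13 b14 b16
        then 1 else 0 else 0 else 0 else 0 else 0 else 0 := by
    intros; rfl
  simp only [Fintype.sum_prod_type, h, sum_bsum, bsum_cond]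
  decide +kernel

end Count
section Reduction
variable {F : Type} [Field F]

/-- boolean squareness test -/
def sq (z : F) : Bool := @decide (IsSquare z) (Classical.propDecidable _)

lemma sq_iff (z : F) : sq z = true ↔ IsSquare z := by unfold sq; simp

lemma sgn_eq (p : F × F) (k : Fin 17) : sgn p k = sq (pv k p.1 p.2) := by
  unfold sgn sq; congr

/-- coefficient selector -/
def cf (a b : F) (i : Bool) : F := if i then a else b

/-- the map `z ↦ 0 * z` -/
def ph (a b z : F) : F := cf a b (sq z) * z

lemma qop_eq (a b u v : F) : qop a b u v = u + ph a b (v - u) := by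
  unfold qop ph cf
  by_cases h : IsSquare (v - u)
  · rw [if_pos h, if_pos ((sq_iff _).2 h)]
  · rw [if_neg h, if_neg (fun h' => h ((sq_iff _).1 h'))]

lemma maxNA_iff (a b : F) : MaxNA a b ↔ ∀ X Y : F,
    ph a b X + ph a b (X + Y - ph a b X) = ph a b (X + ph a b Y) → X = 0 ∧ Y = 0 := by
  unfold MaxNA
  simp only [qop_eq]
  constructor
  · intro h X Y e
    have := h 0 X (X + Y) (by
      have e1 : X + Y - (0 + ph a b (X - 0)) = X + Y - ph a b X := by simp
      have e2 : X + ph a b (X + Y - X) - 0 = X + ph a b Y := by simp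
      rw [e1, e2]
      simpa using e)
    obtain ⟨h1, h2⟩ := this
    refine ⟨h1.symm, ?_⟩
    have := h2
    linear_combination -h2
  · intro h u v w e
    have := h (v - u) (w - v) (by
      have e1 : v - u + (w - v) - ph a b (v - u) = w - (u + ph a b (v - u)) := by ring
      have e2 : v - u + ph a b (w - v) = v + ph a b (w - v) - u := by ring
      rw [e1, e2]
      linear_combination e)
    exact ⟨(sub_eq_zero.1 this.1).symm, (sub_eq_zero.1 this.2).symm⟩

/-- first coordinate of the solution line -/
def n1 (x y : F) (j r s : Bool) : F :=
  match j, r, s with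
  | true, true, true => x * y
  | true, true, false => pv 3 x y
  | true, false, true => x
  | true, false, false => y
  | false, true, true => x
  | false, true, false => y
  | false, false, true => pv 5 x y
  | false, false, false => 1

/-- second coordinate of the solution line -/
def n2 (x y : F) (i r s : Bool) : F :=
  match i, r, s with
  | true, true, true => -(x * y)
  | true, true, false => -y
  | true, false, true => -(pv 4 x y)
  | true, false, false => -x
  | false, true, true => -y
  | false, true, false => pv 6 x y
  | false, false, true => -x
  | false, false, false => -1

/-- third coordinate of the solution line -/
def n3 (x y : F) (i j s : Bool) : F :=
  match i, j, s with
  | true, true, true => -((x * y) * (y * pv 1 x y))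
  | true, true, false => pv 11 x y
  | true, false, true => x * pv 7 x y
  | true, false, false => -(y * pv 1 x y)
  | false, true, true => -((x * y) * pv 1 x y)
  | false, true, false => pv 8 x y
  | false, false, true => pv 13 x y
  | false, false, false => -(pv 1 x y)

/-- fourth coordinate of the solution line -/
def n4 (x y : F) (i j r : Bool) : F :=
  match i, j, r with
  | true, true, true => -((x * y) * (x * pv 16 x y))
  | true, true, false => -(pv 12 x y)
  | true, false, true => -((x * y) * pv 16 x y)
  | true, false, false => -(pv 9 x y)
  | false, true, true => y * pv 10 x y
  | false, true, false => -(x * pv 16 x y)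
  | false, false, true => pv 14 x y
  | false, false, false => -(pv 16 x y)

lemma id1 (x y : F) (i j r s : Bool) :
    (x - y) * n1 x y j r s + cf (x * (1 - y)) (1 - y) j * n2 x y i r s = n3 x y i j s := by
  cases i <;> cases j <;> cases r <;> cases s <;> simp [n1, n2, n3, cf, pv] <;> ring

lemma id2 (x y : F) (i j r s : Bool) :
    cf (y * (x - 1)) (x - 1) i * n1 x y j r s + (x - y) * n2 x y i r s = n4 x y i j r := by
  cases i <;> cases j <;> cases r <;> cases s <;> simp [n1, n2, n4, cf, pv] <;> ring

lemma id3 (x y : F) (i r s : Bool) :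
    cf (x * (1 - y)) (1 - y) i * (x - y)
      + cf (x * (1 - y)) (1 - y) s * cf (y * (x - 1)) (x - 1) i
      - cf (x * (1 - y)) (1 - y) r * (x - y) = (1 - x) * (1 - y) * n2 x y i r s := by
  cases i <;> cases r <;> cases s <;> simp [n2, cf, pv] <;> ring

lemma id4 (x y : F) (j r s : Bool) :
    cf (x * (1 - y)) (1 - y) r * cf (x * (1 - y)) (1 - y) j
      - cf (x * (1 - y)) (1 - y) s * (x - y) = (1 - x) * (1 - y) * n1 x y j r s := by
  cases j <;> cases r <;> cases s <;> simp [n1, cf, pv] <;> ring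

lemma cf_a {x y : F} (hd : x - y ≠ 0) (i : Bool) :
    cf (x * (1 - y) / (x - y)) ((1 - y) / (x - y)) i * (x - y) = cf (x * (1 - y)) (1 - y) i := by
  cases i <;> simp [cf, hd]

lemma cf_b {x y : F} (hd : x - y ≠ 0) (i : Bool) :
    (1 - cf (x * (1 - y) / (x - y)) ((1 - y) / (x - y)) i) * (x - y)
      = cf (y * (x - 1)) (x - 1) i := by
  rw [sub_mul, cf_a hd]
  cases i <;> simp [cf] <;> ring

variable [Fintype F]

lemma bsg_inj {A B D : Bool} (h : bsg A = bsg B * bsg D) : A = (B == D) := by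
  cases A <;> cases B <;> cases D <;> first | rfl | (exfalso; norm_num [bsg] at h)

lemma sq_mul {z w : F} (hz : z ≠ 0) (hw : w ≠ 0) : sq (z * w) = (sq z == sq w) := by
  have e : ∀ z : F, z ≠ 0 → chi z = bsg (sq z) := by
    intro z hz
    rw [chi_eq hz]
    congr 1
    unfold sq; congr
  have := chi_mul z w
  rw [e _ (mul_ne_zero hz hw), e _ hz, e _ hw] at this
  exact bsg_inj this

lemma sq_neg_one (hq : Fintype.card F % 4 = 3) : sq (-1 : F) = false := by
  rw [← Bool.not_eq_true, sq_iff, FiniteField.isSquare_neg_one_iff]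
  simp [hq]

lemma sq_neg (hq : Fintype.card F % 4 = 3) {z : F} (hz : z ≠ 0) : sq (-z) = !(sq z) := by
  have := sq_mul (neg_ne_zero.2 one_ne_zero : (-1 : F) ≠ 0) hz
  rw [neg_one_mul, sq_neg_one hq] at this
  rw [this]; cases sq z <;> rfl

lemma exists_sq (hq : Fintype.card F % 4 = 3) (t : Bool) : ∃ z : F, z ≠ 0 ∧ sq z = t := by
  cases t
  · exact ⟨-1, neg_ne_zero.2 one_ne_zero, sq_neg_one hq⟩
  · exact ⟨1, one_ne_zero, (sq_iff _).2 ⟨1, by simp⟩⟩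

lemma n1_ne {x y : F} (h : ∀ k, pv k x y ≠ 0) (j r s : Bool) : n1 x y j r s ≠ 0 := by
  have hx : x ≠ 0 := h 0
  have hy : y ≠ 0 := h 15
  cases j <;> cases r <;> cases s <;> simp [n1, h, hx, hy]

lemma n2_ne {x y : F} (h : ∀ k, pv k x y ≠ 0) (i r s : Bool) : n2 x y i r s ≠ 0 := by
  have hx : x ≠ 0 := h 0
  have hy : y ≠ 0 := h 15
  cases i <;> cases r <;> cases s <;> simp [n2, h, hx, hy]

lemma n3_ne {x y : F} (h : ∀ k, pv k x y ≠ 0) (i j s : Bool) : n3 x y i j s ≠ 0 := by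
  have hx : x ≠ 0 := h 0
  have hy : y ≠ 0 := h 15
  cases i <;> cases j <;> cases s <;> simp [n3, h, hx, hy]

lemma n4_ne {x y : F} (h : ∀ k, pv k x y ≠ 0) (i j r : Bool) : n4 x y i j r ≠ 0 := by
  have hx : x ≠ 0 := h 0
  have hy : y ≠ 0 := h 15
  cases i <;> cases j <;> cases r <;> simp [n4, h, hx, hy]

lemma sq_one : sq (1 : F) = true := (sq_iff _).2 ⟨1, by simp⟩

lemma sq_n1 {x y : F} (h : ∀ k, pv k x y ≠ 0) (sx : sq x = true)
    (sy : sq y = true) (j r s : Bool) :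
    sq (n1 x y j r s) = t1 (sq (pv 3 x y)) (sq (pv 5 x y)) j r s := by
  have hx : x ≠ 0 := h 0
  have hy : y ≠ 0 := h 15
  have hxy : sq (x * y) = true := by rw [sq_mul hx hy, sx, sy]; rfl
  cases j <;> cases r <;> cases s <;> simp [n1, t1, hxy, sx, sy, sq_one]

lemma sq_n2 (hq : Fintype.card F % 4 = 3) {x y : F} (h : ∀ k, pv k x y ≠ 0) (sx : sq x = true)
    (sy : sq y = true) (i r s : Bool) :
    sq (n2 x y i r s) = t2 (sq (pv 4 x y)) (sq (pv 6 x y)) i r s := by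
  have hx : x ≠ 0 := h 0
  have hy : y ≠ 0 := h 15
  have hxy0 := mul_ne_zero hx hy
  have hxy : sq (x * y) = true := by rw [sq_mul hx hy, sx, sy]; rfl
  cases i <;> cases r <;> cases s <;>
    simp [n2, t2, sq_neg hq hx, sq_neg hq hy, sq_neg hq hxy0, sq_neg hq (h _), hxy, sx, sy,
      sq_neg_one hq]

lemma sq_n3 (hq : Fintype.card F % 4 = 3) {x y : F} (h : ∀ k, pv k x y ≠ 0) (sx : sq x = true)
    (sy : sq y = true) (i j s : Bool) :
    sq (n3 x y i j s) = t3 (sq (pv 1 x y)) (sq (pv 7 x y)) (sq (pv 8 x y)) (sq (pv 11 x y))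
      (sq (pv 13 x y)) i j s := by
  have hx : x ≠ 0 := h 0
  have hy : y ≠ 0 := h 15
  have hxy0 := mul_ne_zero hx hy
  have hxy : sq (x * y) = true := by rw [sq_mul hx hy, sx, sy]; rfl
  have e1 := sq_neg hq (mul_ne_zero hxy0 (mul_ne_zero hy (h 1)))
  have e2 := sq_neg hq (mul_ne_zero hy (h 1))
  have e3 := sq_neg hq (mul_ne_zero hxy0 (h 1))
  rw [sq_mul hxy0 (mul_ne_zero hy (h 1)), hxy, sq_mul hy (h 1), sy] at e1
  rw [sq_mul hy (h 1), sy] at e2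
  rw [sq_mul hxy0 (h 1), hxy] at e3
  cases i <;> cases j <;> cases s <;>
    simp [n3, t3, e1, e2, e3, sq_neg hq (h _), sq_mul hx (h _), sx]

lemma sq_n4 (hq : Fintype.card F % 4 = 3) {x y : F} (h : ∀ k, pv k x y ≠ 0) (sx : sq x = true)
    (sy : sq y = true) (i j r : Bool) :
    sq (n4 x y i j r) = t4 (sq (pv 9 x y)) (sq (pv 10 x y)) (sq (pv 12 x y)) (sq (pv 14 x y))
      (sq (pv 16 x y)) i j r := by
  have hx : x ≠ 0 := h 0
  have hy : y ≠ 0 := h 15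
  have hxy0 := mul_ne_zero hx hy
  have hxy : sq (x * y) = true := by rw [sq_mul hx hy, sx, sy]; rfl
  have e1 := sq_neg hq (mul_ne_zero hxy0 (mul_ne_zero hx (h 16)))
  have e2 := sq_neg hq (mul_ne_zero hx (h 16))
  have e3 := sq_neg hq (mul_ne_zero hxy0 (h 16))
  rw [sq_mul hxy0 (mul_ne_zero hx (h 16)), hxy, sq_mul hx (h 16), sx] at e1
  rw [sq_mul hx (h 16), sx] at e2
  rw [sq_mul hxy0 (h 16), hxy] at e3
  cases i <;> cases j <;> cases r <;>
    simp [n4, t4, e1, e2, e3, sq_neg hq (h _), sq_mul hy (h _), sy]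

/-- the associativity equation, in terms of the sign tables -/
lemma maxNA_iff_hit (hq : Fintype.card F % 4 = 3) {x y : F} (h : ∀ k, pv k x y ≠ 0) :
    MaxNA (x * (1 - y) / (x - y)) ((1 - y) / (x - y)) ↔ ∀ i j r s t : Bool,
      hit i j r s (sq (pv 2 x y)) (sq (n1 x y j r s)) (sq (n2 x y i r s)) (sq (n3 x y i j s))
        (sq (n4 x y i j r)) t = false := by
  have hd : x - y ≠ 0 := h 2
  have h1x : 1 - x ≠ 0 := by have := h 1; rw [pv_1] at this; rwa [sub_eq_neg_add]
  have h1y : 1 - y ≠ 0 := h 16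
  rw [maxNA_iff]
  set a := x * (1 - y) / (x - y) with ha
  set b := (1 - y) / (x - y) with hb
  have ca : ∀ i, cf a b i * (x - y) = cf (x * (1 - y)) (1 - y) i := fun i => cf_a hd i
  have cb : ∀ i, (1 - cf a b i) * (x - y) = cf (y * (x - 1)) (x - 1) i := fun i => cf_b hd i
  have L3 : ∀ i j r s, (x - y) * n1 x y j r s + cf a b j * ((x - y) * n2 x y i r s)
      = n3 x y i j s := by
    intro i j r s
    rw [← id1 x y i j r s, ← ca]; ring
  have L4 : ∀ i j r s, (1 - cf a b i) * ((x - y) * n1 x y j r s) + (x - y) * n2 x y i r s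
      = n4 x y i j r := by
    intro i j r s
    rw [← id2 x y i j r s, ← cb]; ring
  have M1 : ∀ j r s, (cf a b r * cf a b j - cf a b s) * (x - y) ^ 2
      = (1 - x) * (1 - y) * n1 x y j r s := by
    intro j r s
    rw [← id4, ← ca, ← ca, ← ca]; ring
  have M2 : ∀ i r s, (cf a b i + cf a b s * (1 - cf a b i) - cf a b r) * (x - y) ^ 2
      = (1 - x) * (1 - y) * n2 x y i r s := by
    intro i r s
    rw [← id3, ← cb, ← ca, ← ca, ← ca]; ring
  have hk : (1 - x) * (1 - y) ≠ 0 := mul_ne_zero h1x h1y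
  constructor
  · intro H i j r s t
    by_contra hh
    rw [Bool.not_eq_false] at hh
    simp only [hit, Bool.and_eq_true, beq_iff_eq] at hh
    obtain ⟨hi, hj, hr, hs⟩ := hh
    obtain ⟨z, hz, hzt⟩ := exists_sq (F := F) hq t
    have N1 := n1_ne h j r s
    have N2 := n2_ne h i r s
    have N3 := n3_ne h i j s
    have N4 := n4_ne h i j r
    have sX : sq (z * ((x - y) * n1 x y j r s)) = i := by
      rw [sq_mul hz (mul_ne_zero hd N1), sq_mul hd N1, hzt]; exact hi.symm
    have sY : sq (z * ((x - y) * n2 x y i r s)) = j := by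
      rw [sq_mul hz (mul_ne_zero hd N2), sq_mul hd N2, hzt]; exact hj.symm
    have s3 : sq (z * n3 x y i j s) = r := by rw [sq_mul hz N3, hzt]; exact hr.symm
    have s4 : sq (z * n4 x y i j r) = s := by rw [sq_mul hz N4, hzt]; exact hs.symm
    set X := z * ((x - y) * n1 x y j r s) with hX
    set Y := z * ((x - y) * n2 x y i r s) with hY
    have p1 : ph a b X = cf a b i * X := by unfold ph; rw [sX]
    have p2 : ph a b Y = cf a b j * Y := by unfold ph; rw [sY]
    have e3 : X + ph a b Y = z * n3 x y i j s := by
      rw [p2, ← L3 i j r s, hX, hY]; ring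
    have e4 : X + Y - ph a b X = z * n4 x y i j r := by
      rw [p1, ← L4 i j r s, hX, hY]; ring
    have p3 : ph a b (X + ph a b Y) = cf a b r * (X + cf a b j * Y) := by
      rw [← p2]; unfold ph at e3 ⊢; rw [e3, s3]
    have p4 : ph a b (X + Y - ph a b X) = cf a b s * (X + Y - cf a b i * X) := by
      rw [← p1]; unfold ph at e4 ⊢; rw [e4, s4]
    have := (H X Y (by
      rw [p3, p4, p1]
      have key : (cf a b i + cf a b s * (1 - cf a b i) - cf a b r) * X
          = (cf a b r * cf a b j - cf a b s) * Y := by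
        have : ((cf a b i + cf a b s * (1 - cf a b i) - cf a b r) * X) * (x - y) ^ 2
          = ((cf a b r * cf a b j - cf a b s) * Y) * (x - y) ^ 2 := by
          rw [mul_right_comm, M2, mul_right_comm _ Y, M1, hX, hY]; ring
        exact mul_right_cancel₀ (pow_ne_zero 2 hd) this
      linear_combination key)).1
    exact mul_ne_zero hz (mul_ne_zero hd N1) this
  · intro H X Y e
    by_contra hne
    set i := sq X with hi
    set j := sq Y with hj
    have p1 : ph a b X = cf a b i * X := rfl
    have p2 : ph a b Y = cf a b j * Y := rfl
    set r := sq (X + ph a b Y) with hr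
    set s := sq (X + Y - ph a b X) with hs
    have p3 : ph a b (X + ph a b Y) = cf a b r * (X + cf a b j * Y) := rfl
    have p4 : ph a b (X + Y - ph a b X) = cf a b s * (X + Y - cf a b i * X) := rfl
    rw [p3, p4, p1] at e
    have N1 := n1_ne h j r s
    have N2 := n2_ne h i r s
    have N3 := n3_ne h i j s
    have N4 := n4_ne h i j r
    have key : n2 x y i r s * X = n1 x y j r s * Y := by
      apply mul_left_cancel₀ hk
      rw [← mul_assoc, ← M2, ← mul_assoc, ← M1]
      linear_combination (x - y) ^ 2 * e
    set z := X / ((x - y) * n1 x y j r s) with hz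
    have hX : X = z * ((x - y) * n1 x y j r s) := by
      rw [hz, div_mul_cancel₀ _ (mul_ne_zero hd N1)]
    have hY : Y = z * ((x - y) * n2 x y i r s) := by
      apply mul_left_cancel₀ N1
      rw [← key]
      calc n2 x y i r s * X = n2 x y i r s * (z * ((x - y) * n1 x y j r s)) := by rw [← hX]
        _ = _ := by ring
    have z0 : z ≠ 0 := by
      intro h0
      exact hne ⟨by rw [hX, h0, zero_mul], by rw [hY, h0, zero_mul]⟩
    have e3 : X + ph a b Y = z * n3 x y i j s := by
      rw [p2, ← L3 i j r s]
      calc X + cf a b j * Y = z * ((x - y) * n1 x y j r s)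
            + cf a b j * (z * ((x - y) * n2 x y i r s)) := by rw [← hX, ← hY]
        _ = _ := by ring
    have e4 : X + Y - ph a b X = z * n4 x y i j r := by
      rw [p1, ← L4 i j r s]
      calc X + Y - cf a b i * X = z * ((x - y) * n1 x y j r s) + z * ((x - y) * n2 x y i r s)
            - cf a b i * (z * ((x - y) * n1 x y j r s)) := by rw [← hX, ← hY]
        _ = _ := by ring
    have := H i j r s (sq z)
    rw [← Bool.not_eq_true] at this
    apply this
    simp only [hit, Bool.and_eq_true, beq_iff_eq]
    refine ⟨?_, ?_, ?_, ?_⟩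
    · have := sq_mul z0 (mul_ne_zero hd N1)
      rw [← hX, sq_mul hd N1] at this
      exact this
    · have := sq_mul z0 (mul_ne_zero hd N2)
      rw [← hY, sq_mul hd N2] at this
      exact this
    · have := sq_mul z0 N3
      rw [← e3] at this
      exact this
    · have := sq_mul z0 N4
      rw [← e4] at this
      exact this

end Reduction
section Final
variable {F : Type} [Field F] [Fintype F]

/-- admissible pairs `(x,y)` -/
def adm (p : F × F) : Prop :=
  sq p.1 = true ∧ sq p.2 = true ∧ p.1 ≠ 0 ∧ p.2 ≠ 0 ∧ p.1 ≠ 1 ∧ p.2 ≠ 1 ∧ p.1 ≠ p.2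

/-- change of variables -/
def gmap (p : F × F) : F × F := (p.1 * (1 - p.2) / (p.1 - p.2), (1 - p.2) / (p.1 - p.2))

lemma gmap_inj {p p' : F × F} (h : adm p) (h' : adm p') (e : gmap p = gmap p') : p = p' := by
  obtain ⟨x, y⟩ := p
  obtain ⟨x', y'⟩ := p'
  obtain ⟨-, -, h3, h4, h5, h6, h7⟩ := h
  obtain ⟨-, -, h3', h4', h5', h6', h7'⟩ := h'
  simp only at h3 h4 h5 h6 h7 h3' h4' h5' h6' h7'
  simp only [gmap, Prod.mk.injEq] at e
  obtain ⟨e1, e2⟩ := e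
  have d : x - y ≠ 0 := sub_ne_zero.2 h7
  have d' : x' - y' ≠ 0 := sub_ne_zero.2 h7'
  have u : 1 - y ≠ 0 := sub_ne_zero.2 (Ne.symm h6)
  have u' : 1 - y' ≠ 0 := sub_ne_zero.2 (Ne.symm h6')
  have ex : x = x' := by
    rw [mul_div_assoc, mul_div_assoc, ← e2] at e1
    exact mul_right_cancel₀ (div_ne_zero u d) e1
  subst ex
  rw [div_eq_div_iff d d'] at e2
  have : (x - 1) * (y - y') = 0 := by linear_combination -e2
  rcases mul_eq_zero.1 this with h | h
  · exact absurd (sub_eq_zero.1 h) h5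
  · rw [sub_eq_zero.1 h]

lemma isSq_div {z w : F} (h : IsSquare (z * w)) : IsSquare (z / w) := by
  by_cases hw : w = 0
  · subst hw; simp
  · obtain ⟨t, ht⟩ := h
    refine ⟨t / w, ?_⟩
    rw [div_mul_div_comm, ← ht, mul_div_mul_right _ _ hw]

lemma gmap_image : {p : F × F | p ∈ SigSet F ∧ MaxNA p.1 p.2} =
    gmap '' {p : F × F | adm p ∧ MaxNA (gmap p).1 (gmap p).2} := by
  ext ⟨a, b⟩
  constructor
  · rintro ⟨⟨h1, h2, h3, h4, h5, h6, h7⟩, hm⟩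
    simp only at h1 h2 h3 h4 h5 h6 h7 hm
    have u : 1 - a ≠ 0 := sub_ne_zero.2 (Ne.symm h3)
    have w : 1 - b ≠ 0 := sub_ne_zero.2 (Ne.symm h5)
    have dab : a - b ≠ 0 := sub_ne_zero.2 h1
    have d : a / b - (1 - a) / (1 - b) = (a - b) / (b * (1 - b)) := by
      field_simp; ring
    have d0 : a / b - (1 - a) / (1 - b) ≠ 0 := by
      rw [d]; exact div_ne_zero dab (mul_ne_zero h4 w)
    have e0 : 1 - (1 - a) / (1 - b) = (a - b) / (1 - b) := by field_simp; ring
    have eb : (1 - (1 - a) / (1 - b)) / (a / b - (1 - a) / (1 - b)) = b := by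
      rw [d, e0]; field_simp
    have g : gmap (a / b, (1 - a) / (1 - b)) = (a, b) := by
      simp only [gmap, Prod.mk.injEq]
      refine ⟨?_, eb⟩
      rw [mul_div_assoc, eb]; field_simp
    refine ⟨(a / b, (1 - a) / (1 - b)), ⟨⟨?_, ?_, ?_, ?_, ?_, ?_, ?_⟩, ?_⟩, g⟩
    · exact (sq_iff _).2 (isSq_div h6)
    · exact (sq_iff _).2 (isSq_div h7)
    · exact div_ne_zero h2 h4
    · exact div_ne_zero u w
    · simp only [ne_eq]; rw [div_eq_one_iff_eq h4]; exact h1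
    · simp only [ne_eq]; rw [div_eq_one_iff_eq w]
      intro e; exact h1 (by linear_combination -e)
    · exact sub_ne_zero.1 d0
    · rw [g]; exact hm
  · rintro ⟨⟨x, y⟩, ⟨⟨h1, h2, h3, h4, h5, h6, h7⟩, hm⟩, g⟩
    simp only at h1 h2 h3 h4 h5 h6 h7
    rw [g] at hm
    refine ⟨?_, hm⟩
    rw [sq_iff] at h1 h2
    have d : x - y ≠ 0 := sub_ne_zero.2 h7
    have u : 1 - y ≠ 0 := sub_ne_zero.2 (Ne.symm h6)
    have w : x - 1 ≠ 0 := sub_ne_zero.2 h5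
    simp only [gmap, Prod.mk.injEq] at g
    obtain ⟨ga, gb⟩ := g
    have b0 : b ≠ 0 := by rw [← gb]; exact div_ne_zero u d
    have ab : a = x * b := by rw [← ga, ← gb, mul_div_assoc]
    have b1 : 1 - b = (x - 1) / (x - y) := by rw [← gb]; field_simp; ring
    have a1 : 1 - a = y * (1 - b) := by rw [b1, ← ga]; field_simp; ring
    have b10 : 1 - b ≠ 0 := by rw [b1]; exact div_ne_zero w d
    have a10 : 1 - a ≠ 0 := by rw [a1]; exact mul_ne_zero h4 b10
    refine ⟨?_, ?_, ?_, b0, ?_, ?_, ?_⟩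
    · simp only
      intro e
      rw [e] at ab
      have : (x - 1) * b = 0 := by linear_combination -ab
      exact mul_ne_zero w b0 this
    · simp only; rw [ab]; exact mul_ne_zero h3 b0
    · exact (sub_ne_zero.1 a10).symm
    · exact (sub_ne_zero.1 b10).symm
    · simp only; rw [ab, mul_assoc]; exact h1.mul ⟨b, rfl⟩
    · simp only; rw [a1, mul_assoc]; exact h2.mul ⟨1 - b, rfl⟩

/-- admissible pairs giving maximally nonassociative quasigroups -/
def goodPairs (F : Type) [Field F] [Fintype F] : Finset (F × F) :=
  Finset.univ.filter fun p : F × F => adm p ∧ MaxNA (gmap p).1 (gmap p).2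

lemma sigmaCount_eq : sigmaCount F = (goodPairs F).card := by
  unfold sigmaCount
  rw [gmap_image, Set.ncard_image_of_injOn]
  · rw [← Set.ncard_coe_finset]
    congr 1
    ext p
    simp [goodPairs]
  · intro p hp p' hp' e
    exact gmap_inj hp.1 hp'.1 e

/-- the favourable sign vectors -/
def Phi : Finset (Fin 17 → Bool) := Finset.univ.filter fun v => good v = 1

lemma good_le (v : Fin 17 → Bool) : good v = if good v = 1 then 1 else 0 := by
  have h : ∀ (c : Bool) (n : ℕ), (n = 0 ∨ n = 1) →
      ((bif c then n else 0) = 0 ∨ (bif c then n else 0) = 1) := by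
    intro c n hn; cases c
    · exact Or.inl rfl
    · exact hn
  have : good v = 0 ∨ good v = 1 := by
    unfold good
    exact h _ _ (h _ _ (h _ _ (h _ _ (h _ _ (h _ _ (Or.inr rfl))))))
  rcases this with e | e <;> rw [e] <;> simp

lemma Phi_card : Phi.card = 1650 := by
  unfold Phi
  rw [Finset.card_filter, ← sum_good]
  exact Finset.sum_congr rfl fun v _ => (good_le v).symm

lemma cond_one {c : Bool} {n : ℕ} : (bif c then n else 0) = 1 ↔ c = true ∧ n = 1 := by
  cases c <;> simp

lemma mem_Phi_iff (hq : Fintype.card F % 4 = 3) (p : F × F) (hp : p ∉ nongen F) :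
    sgn p ∈ Phi ↔ adm p ∧ MaxNA (gmap p).1 (gmap p).2 := by
  obtain ⟨x, y⟩ := p
  have h : ∀ k, pv k x y ≠ 0 := by
    intro k hk
    exact hp (by simp only [nongen, Finset.mem_filter, Finset.mem_univ, true_and]; exact ⟨k, hk⟩)
  have hx : x ≠ 0 := h 0
  have hy : y ≠ 0 := h 15
  have hx1 : x ≠ 1 := by
    intro e; apply h 1; rw [pv_1, e]; ring
  have hy1 : y ≠ 1 := by
    intro e; apply h 16; rw [pv_16, e]; ring
  have hxy : x ≠ y := by
    intro e; apply h 2; rw [pv_2, e]; ring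
  have ha : adm (x, y) ↔ sq y = true ∧ sq x = true := by
    unfold adm; simp only; tauto
  simp only [Phi, Finset.mem_filter, Finset.mem_univ, true_and, good, cond_one, sgn_eq, and_true]
  have p0 : pv 0 x y = x := rfl
  have p15 : pv 15 x y = y := rfl
  rw [ha, p0, p15, and_assoc]
  refine and_congr_right fun sy => and_congr_right fun sx => ?_
  have hm := maxNA_iff_hit hq h
  rw [show MaxNA (gmap (x, y)).1 (gmap (x, y)).2 ↔
    MaxNA (x * (1 - y) / (x - y)) ((1 - y) / (x - y)) from Iff.rfl, hm]
  simp only [sq_n1 h sx sy, sq_n2 hq h sx sy, sq_n3 hq h sx sy, sq_n4 hq h sx sy]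
  simp only [okt, okp_iff]
  constructor
  · rintro ⟨A, B, D, E⟩ i j r s t
    cases i <;> cases j
    · have := E r s t; cases r <;> cases s <;> exact this
    · have := B r s t; cases r <;> cases s <;> exact this
    · have := A r s t; cases r <;> cases s <;> exact this
    · have := D r s t; cases r <;> cases s <;> exact this
  · intro H
    refine ⟨fun r s t => ?_, fun r s t => ?_, fun r s t => ?_, fun r s t => ?_⟩
    · have := H true false r s t; cases r <;> cases s <;> exact this
    · have := H false true r s t; cases r <;> cases s <;> exact this
    · have := H true true r s t; cases r <;> cases s <;> exact this
    · have := H false false r s t; cases r <;> cases s <;> exact this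

lemma count_close (hq : Fintype.card F % 4 = 3) :
    |(sigmaCount F : ℝ) - ((Finset.univ.filter
      fun p : F × F => p ∉ nongen F ∧ sgn p ∈ Phi).card : ℝ)| ≤ 200 * Fintype.card F := by
  have h2 : (2 : F) ≠ 0 := two_ne_of_odd (by omega)
  rw [sigmaCount_eq]
  have e : (Finset.univ.filter fun p : F × F => p ∉ nongen F ∧ sgn p ∈ Phi) =
      goodPairs F \ nongen F := by
    ext p
    simp only [goodPairs, Finset.mem_filter, Finset.mem_univ, true_and, Finset.mem_sdiff]
    constructor
    · rintro ⟨a, b⟩; exact ⟨(mem_Phi_iff hq p a).1 b, a⟩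
    · rintro ⟨a, b⟩; exact ⟨b, (mem_Phi_iff hq p b).2 a⟩
  rw [e]
  have l1 : (goodPairs F \ nongen F).card ≤ (goodPairs F).card :=
    Finset.card_le_card Finset.sdiff_subset
  have l2 : (goodPairs F).card ≤ (goodPairs F \ nongen F).card + (nongen F).card := by
    have := Finset.le_card_sdiff (nongen F) (goodPairs F)
    omega
  have l3 := nongen_card (F := F) h2
  have l1' : ((goodPairs F \ nongen F).card : ℝ) ≤ (goodPairs F).card := by exact_mod_cast l1
  have l2' : ((goodPairs F).card : ℝ) ≤ (goodPairs F \ nongen F).card + (nongen F).card := by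
    exact_mod_cast l2
  have l3' : ((nongen F).card : ℝ) ≤ 200 * Fintype.card F := by exact_mod_cast l3
  rw [abs_le]
  constructor <;> linarith

end Final

theorem final (ε : ℝ) (hε : 0 < ε) : ∃ N : ℕ,
      ∀ (q : ℕ) (F : Type) [Field F] [Fintype F],
        Fintype.card F = q → q % 4 = 3 → q > N →
        |(sigmaCount F : ℝ) / (q : ℝ) ^ 2 - 825 / 2 ^ 16| < ε := by
  obtain ⟨N, hN⟩ := equi Phi (ε / 4) (by positivity)
  obtain ⟨M, hM⟩ := exists_nat_gt (200 / (ε / 4))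
  refine ⟨max N M, fun q F _ _ hc hq hF => ?_⟩
  subst hc
  have hNF : N < Fintype.card F := lt_of_le_of_lt (le_max_left _ _) hF
  have hMF : M < Fintype.card F := lt_of_le_of_lt (le_max_right _ _) hF
  have W := hN F hNF (by omega)
  have V := count_close (F := F) hq
  rw [Phi_card] at W
  set A := ((Finset.univ.filter fun p : F × F => p ∉ nongen F ∧ sgn p ∈ Phi).card : ℝ)
  set q : ℝ := (Fintype.card F : ℝ) with hqq
  have hq0 : 0 < q := by
    rw [hqq]; exact_mod_cast Nat.pos_of_ne_zero (by omega)
  have hMq : 200 ≤ ε / 4 * q := by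
    have : (M : ℝ) < q := by rw [hqq]; exact_mod_cast hMF
    have h := hM.trans this
    rw [div_lt_iff₀ (by positivity)] at h
    linarith
  have hq2 : 0 < q ^ 2 := by positivity
  have h4 : 200 * q ≤ ε / 4 * q ^ 2 := by nlinarith
  have e : (sigmaCount F : ℝ) / q ^ 2 - 825 / 2 ^ 16 =
      ((sigmaCount F : ℝ) - (1650 : ℕ) / 2 ^ 17 * q ^ 2) / q ^ 2 := by
    field_simp; norm_num; ring
  rw [e, abs_div, abs_of_pos hq2, div_lt_iff₀ hq2]
  have h5 : |(sigmaCount F : ℝ) - (1650 : ℕ) / 2 ^ 17 * q ^ 2| ≤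
      |(sigmaCount F : ℝ) - A| + |A - (1650 : ℕ) / 2 ^ 17 * q ^ 2| := abs_sub_le _ _ _
  have h6 : 0 < ε * q ^ 2 := by positivity
  linarith

end Polys
end MNA

/-- As `q` runs through prime powers with `q ≡ 3 (mod 4)`, `σ(q)/q²` converges
to `825·2⁻¹⁶`. -/
theorem sigma_ratio_tendsto_three_mod_four :
    ∀ ε : ℝ, 0 < ε → ∃ N : ℕ,
      ∀ (q : ℕ) (F : Type) [Field F] [Fintype F],
        Fintype.card F = q → q % 4 = 3 → q > N →
        |(sigmaCount F : ℝ) / (q : ℝ) ^ 2 - 825 / 2 ^ 16| < ε := by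
  exact fun ε hε => MNA.final ε hε
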